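/- Let 2 ≤ p < ∞, 0 < q ≤ ∞, and s ≥ 0. There exists C > 0, depending only on φ, Φ, p, q, s, such that for every admissible finite collection 𝓘 = {[a_m,b_m]}_{m=1}^N and every Schwartz function f, one has ( Σ_{j∈ℤ} ( 2^{js} ‖ ( Σ_{m=1}^N |((f∗φ_m)∗ψ_j)(x)|² )^{1/2} ‖_{L^p(dx)} )^q )^{1/q} ≤ C ( Σ_{j∈ℤ} ( 2^{js} ‖ f∗ψ_j ‖_{L^p} )^q )^{1/q} (suprema over j when q = ∞). This is the uniform boundedness of the family WITHOUT rotations on the homogeneous Besov space Ḃ^s_{pq}. -/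

import Mathlib

open MeasureTheory Real Set Function
open scoped FourierTransform ENNReal NNReal

/-- `e2pi t = e^{2πit}`. -/
noncomputable def e2pi (t : ℝ) : ℂ := Complex.exp (2 * (Real.pi : ℂ) * Complex.I * (t : ℂ))

/-- Convolution of two functions on `ℝ`. -/
noncomputable def conv (f g : ℝ → ℂ) (x : ℝ) : ℂ := ∫ t, f t * g (x - t)

/-- The function `φ_m` associated with the interval `[a,b]`: its Fourier transform is
`ξ ↦ 𝓕φ ((ξ - a)/(b - a))`; in space variables it is `x ↦ (b-a) e^{2πiax} φ((b-a)x)`. -/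
noncomputable def phim (φ : ℝ → ℂ) (a b : ℝ) (x : ℝ) : ℂ :=
  ((b - a : ℝ) : ℂ) * e2pi (a * x) * φ ((b - a) * x)

/-- A finite collection of compact intervals `[a m, b m]` is admissible if the intervals are
nondegenerate, pairwise disjoint, and none of them contains `0` in its interior. -/
def Admissible {N : ℕ} (a b : Fin N → ℝ) : Prop :=
  (∀ m, a m < b m) ∧ (∀ m, (0 : ℝ) ∉ Set.Ioo (a m) (b m)) ∧
    ∀ m m', m ≠ m' → Disjoint (Set.Icc (a m) (b m)) (Set.Icc (a m') (b m'))

/-- The rotated Rubio de Francia piece `g_m(x) = e^{-2πi a x} (f ∗ φ_m)(x)`. -/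
noncomputable def rotConv (φ : ℝ → ℂ) (a b : ℝ) (f : ℝ → ℂ) (x : ℝ) : ℂ :=
  e2pi (-(a * x)) * conv f (phim φ a b) x

/-- Littlewood–Paley block `ψ_j`, whose Fourier transform is `ξ ↦ 𝓕Φ(2^{-j}ξ) - 𝓕Φ(2^{-j+1}ξ)`. -/
noncomputable def psi (Φ : ℝ → ℂ) (j : ℤ) (x : ℝ) : ℂ :=
  (((2:ℝ) ^ j : ℝ) : ℂ) * Φ ((2:ℝ) ^ j * x) - (((2:ℝ) ^ (j-1) : ℝ) : ℂ) * Φ ((2:ℝ) ^ (j-1) * x)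

/-- The `ℓ^q` (quasi)norm of a sequence indexed by `ℤ`, with values in `[0,∞]`;
for `q = ∞` it is the supremum. -/
noncomputable def lqNorm (q : ℝ≥0∞) (F : ℤ → ℝ≥0∞) : ℝ≥0∞ :=
  if q = ∞ then ⨆ j, F j else (∑' j, F j ^ q.toReal) ^ (1 / q.toReal)

lemma orth_gen (g h : ℝ → ℂ) (hgc : Continuous g) (hg : Integrable g) (hg' : Integrable (𝓕 g))
    (hh : Integrable h) (H : ∀ ξ, 𝓕 g ξ = 0 ∨ 𝓕 h ξ = 0) :
    ∫ y, h y * (starRingEnd ℂ) (g y) = 0 := by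
  have h1 : ∀ y, (starRingEnd ℂ) (g y) = 𝓕 (fun ξ => (starRingEnd ℂ) (𝓕 g ξ)) y := by
    intro y
    have := congrFun (hgc.fourierInv_fourier_eq hg hg') y
    rw [← this, Real.fourierInv_eq', Real.fourier_eq', ← integral_conj]
    congr 1
    ext v
    have h2 : (starRingEnd ℂ) (2:ℂ) = 2 := Complex.conj_ofNat 2
    simp [← Complex.exp_conj, h2]
  have h2 : Integrable (fun ξ => (starRingEnd ℂ) (𝓕 g ξ)) :=
    (LinearIsometryEquiv.integrable_comp_iff Complex.conjLIE).2 hg'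
  have h3 := VectorFourier.integral_fourierIntegral_smul_eq_flip (L := innerₗ ℝ) (μ := volume) (ν := volume)
    Real.continuous_fourierChar continuous_inner h2 hh
  have h4 : ∫ y, 𝓕 (fun ξ => (starRingEnd ℂ) (𝓕 g ξ)) y * h y
      = ∫ y, (starRingEnd ℂ) (𝓕 g y) * 𝓕 h y := by
    simpa using! h3
  simp_rw [h1]
  simp_rw [mul_comm (h _)]
  rw [h4]
  rw [← integral_zero (α := ℝ) (μ := volume) (G := ℂ)]
  congr 1
  ext ξ
  rcases H ξ with h | h <;> simp [h]

lemma e2pi_add (s t : ℝ) : e2pi (s + t) = e2pi s * e2pi t := by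
  simp only [e2pi, ← Complex.exp_add]; congr 1; push_cast; ring

lemma norm_e2pi (t : ℝ) : ‖e2pi t‖ = 1 := by
  have : e2pi t = Complex.exp ((2 * Real.pi * t : ℝ) * Complex.I) := by
    simp only [e2pi]; congr 1; push_cast; ring
  rw [this, Complex.norm_exp_ofReal_mul_I]

lemma continuous_e2pi : Continuous e2pi := by
  unfold e2pi; fun_prop

/-- modulated, dilated, reflected copy -/
noncomputable def wp (η : ℝ → ℂ) (a l x y : ℝ) : ℂ := e2pi (-(a * y)) * η (l * (x - y))

lemma fourier_wp (η : ℝ → ℂ) (a l x ξ : ℝ) (hl : 0 < l) :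
    𝓕 (wp η a l x) ξ = e2pi (-((ξ + a) * x)) * ((l⁻¹ : ℝ) : ℂ) * 𝓕 η (-((ξ + a) / l)) := by
  rw [Real.fourier_eq', Real.fourier_eq']
  have key : ∀ y, Complex.exp (↑(-2 * π * inner ℝ y ξ) * Complex.I) • wp η a l x y
      = (fun t => e2pi (-((ξ + a) * x)) * (Complex.exp (↑(-2 * π * inner ℝ t (-((ξ + a) / l))) * Complex.I) • η t)) (l * (x - y)) := by
    intro y
    simp only [wp, e2pi, smul_eq_mul, RCLike.inner_apply, conj_trivial]
    rw [← mul_assoc, ← Complex.exp_add, ← mul_assoc (Complex.exp _) (Complex.exp _),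
      ← Complex.exp_add]
    congr 2
    push_cast
    have : (l : ℂ) ≠ 0 := by exact_mod_cast hl.ne'
    field_simp
    ring
  simp_rw [key]
  rw [integral_sub_left_eq_self (fun z => (fun t => e2pi (-((ξ + a) * x)) * (Complex.exp (↑(-2 * π * inner ℝ t (-((ξ + a) / l))) * Complex.I) • η t)) (l * z)) volume x]
  rw [Measure.integral_comp_mul_left (fun t => e2pi (-((ξ + a) * x)) * (Complex.exp (↑(-2 * π * inner ℝ t (-((ξ + a) / l))) * Complex.I) • η t)), integral_const_mul, abs_of_pos (inv_pos.2 hl), Complex.real_smul]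
  ring

lemma wp_continuous (η : ℝ → ℂ) (hη : Continuous η) (a l x : ℝ) : Continuous (wp η a l x) := by
  unfold wp
  have := continuous_e2pi
  fun_prop

lemma integrable_dil {F : Type*} [NormedAddCommGroup F] (η : ℝ → F) (hη : Integrable η) (l x : ℝ) (hl : 0 < l) :
    Integrable (fun y => η (l * (x - y))) := by
  have := (hη.comp_mul_left' hl.ne')
  exact this.comp_sub_left x

lemma wp_integrable (η : ℝ → ℂ) (hη : Integrable η) (a l x : ℝ) (hl : 0 < l) :
    Integrable (wp η a l x) := by
  unfold wp
  have h1 := integrable_dil η hη l x hl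
  refine h1.bdd_mul (c := 1) ?_ ?_
  · exact (continuous_e2pi.comp (by fun_prop)).aestronglyMeasurable
  · exact Filter.Eventually.of_forall fun y => (norm_e2pi _).le

lemma orth_wp (η θ : SchwartzMap ℝ ℂ) (hη : Function.support (𝓕 ⇑η) ⊆ Icc 0 1)
    (hθ : Function.support (𝓕 ⇑θ) ⊆ Icc 0 1) (a b c d : ℝ) (hab : a < b) (hcd : c < d)
    (hd : Disjoint (Icc a b) (Icc c d)) (x x' : ℝ) :
    ∫ y, wp η a (b - a) x y * (starRingEnd ℂ) (wp θ c (d - c) x' y) = 0 := by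
  have l1 : 0 < b - a := by linarith
  have l2 : 0 < d - c := by linarith
  apply orth_gen _ _ (wp_continuous _ θ.continuous _ _ _) (wp_integrable _ θ.integrable _ _ _ l2) _
    (wp_integrable _ η.integrable _ _ _ l1)
  · intro ξ
    rw [fourier_wp _ _ _ _ _ l1, fourier_wp _ _ _ _ _ l2]
    by_contra! hcon
    have h1 : -((ξ + c) / (d - c)) ∈ Icc (0:ℝ) 1 := hθ (right_ne_zero_of_mul hcon.1)
    have h2 : -((ξ + a) / (b - a)) ∈ Icc (0:ℝ) 1 := hη (right_ne_zero_of_mul hcon.2)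
    refine Set.disjoint_left.1 hd (?_ : -ξ ∈ _) ?_
    · rw [← neg_div] at h2
      have := (le_div_iff₀ l1).1 h2.1
      have := (div_le_iff₀ l1).1 h2.2
      constructor <;> linarith
    · rw [← neg_div] at h1
      have := (le_div_iff₀ l2).1 h1.1
      have := (div_le_iff₀ l2).1 h1.2
      constructor <;> linarith
  · have : 𝓕 (wp θ c (d - c) x') = fun ξ => e2pi (-((ξ + c) * x')) * ((((d-c)⁻¹ : ℝ) : ℂ) * 𝓕 θ (-((ξ + c) / (d-c)))) := by
      ext ξ; rw [fourier_wp _ _ _ _ _ l2, mul_assoc]; rfl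
    rw [this]
    have h1 : Integrable (fun ξ : ℝ => 𝓕 θ (-((ξ + c) / (d-c)))) := by
      have := integrable_dil _ (𝓕 θ).integrable (d-c)⁻¹ (-c) (inv_pos.2 l2)
      refine this.congr (Filter.Eventually.of_forall fun ξ => ?_)
      simp only
      congr 1
      field_simp
      ring
    refine (h1.const_mul _).bdd_mul (c := 1) ?_ ?_
    · exact (continuous_e2pi.comp (by fun_prop)).aestronglyMeasurable
    · exact Filter.Eventually.of_forall fun y => (norm_e2pi _).le

/-- multiplication by the variable -/
lemma exists_mulX (η : SchwartzMap ℝ ℂ) (hη : Function.support (𝓕 ⇑η) ⊆ Icc 0 1) :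
    ∃ θ : SchwartzMap ℝ ℂ, (∀ t, θ t = t * η t) ∧ Function.support (𝓕 ⇑θ) ⊆ Icc 0 1 := by
  have hX : Function.HasTemperateGrowth (fun t : ℝ => t) := by fun_prop
  refine ⟨SchwartzMap.smulLeftCLM ℂ (fun t : ℝ => t) η, ?_, ?_⟩
  · intro t
    rw [SchwartzMap.smulLeftCLM_apply_apply hX]
    simp
  · set θ := SchwartzMap.smulLeftCLM ℂ (fun t : ℝ => t) η with hθ
    have h0 : ∀ t, θ t = t * η t := by
      intro t
      rw [hθ, SchwartzMap.smulLeftCLM_apply_apply hX]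
      simp
    have hi : Integrable (fun t : ℝ => t • η t) := by
      refine θ.integrable.congr (Filter.Eventually.of_forall fun t => ?_)
      simp [h0]
    have h1 := Real.deriv_fourier (f := ⇑η) η.integrable hi
    have h2 : (fun x : ℝ => (-2 * π * Complex.I * x) • η x) = (-2 * π * Complex.I) • ⇑θ := by
      ext t; simp [h0]; ring
    rw [h2] at h1
    intro ξ hξ
    have h3 : 𝓕 ((-2 * (π:ℂ) * Complex.I) • ⇑θ) ξ = (-2 * π * Complex.I) * 𝓕 ⇑θ ξ := by
      rw [Real.fourier_eq', Real.fourier_eq', ← integral_const_mul]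
      congr 1; ext v; simp; ring
    have h4 : deriv (𝓕 ⇑η) ξ ≠ 0 := by
      rw [h1, h3]
      have : (π : ℂ) ≠ 0 := by exact_mod_cast Real.pi_ne_zero
      simp [this]
      exact hξ
    have h5 : ξ ∈ tsupport (𝓕 ⇑η) := support_deriv_subset h4
    exact (closure_minimal hη isClosed_Icc) h5

inductive InS (a b : ℝ) : (ℝ → ℂ) → Prop
  | wp (η : SchwartzMap ℝ ℂ) (x : ℝ) (hη : Function.support (𝓕 ⇑η) ⊆ Icc 0 1) : InS a b (wp η a (b - a) x)
  | add (u v : ℝ → ℂ) : InS a b u → InS a b v → InS a b (fun y => u y + v y)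
  | smul (k : ℂ) (u : ℝ → ℂ) : InS a b u → InS a b (fun y => k * u y)

lemma InS.props {a b : ℝ} (hab : a < b) {u : ℝ → ℂ} (hu : InS a b u) :
    Continuous u ∧ Integrable u ∧ ∃ M, ∀ y, ‖u y‖ ≤ M := by
  induction hu with
  | wp η x hη =>
    refine ⟨wp_continuous _ η.continuous _ _ _, wp_integrable _ η.integrable _ _ _ (by linarith), 
      (SchwartzMap.seminorm ℝ 0 0) η, fun y => ?_⟩
    rw [_root_.wp, norm_mul, norm_e2pi, one_mul]
    exact SchwartzMap.norm_le_seminorm ℝ η _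
  | add u v _ _ h1 h2 =>
    obtain ⟨c1, i1, M1, b1⟩ := h1
    obtain ⟨c2, i2, M2, b2⟩ := h2
    exact ⟨c1.add c2, i1.add i2, M1 + M2, fun y => (norm_add_le _ _).trans (add_le_add (b1 y) (b2 y))⟩
  | smul k u _ h1 =>
    obtain ⟨c1, i1, M1, b1⟩ := h1
    refine ⟨continuous_const.mul c1, i1.const_mul k, ‖k‖ * M1, fun y => ?_⟩
    rw [norm_mul]
    exact mul_le_mul_of_nonneg_left (b1 y) (norm_nonneg _)

lemma InS.integrable_mul {a b : ℝ} (hab : a < b) {u : ℝ → ℂ} (hu : InS a b u)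
    {c d : ℝ} (hcd : c < d) {v : ℝ → ℂ} (hv : InS c d v) :
    Integrable (fun y => u y * (starRingEnd ℂ) (v y)) := by
  obtain ⟨c1, i1, M1, b1⟩ := hu.props hab
  obtain ⟨c2, i2, M2, b2⟩ := hv.props hcd
  refine Integrable.bdd_mul (c := M1) ((LinearIsometryEquiv.integrable_comp_iff Complex.conjLIE).2 i2) c1.aestronglyMeasurable
    (Filter.Eventually.of_forall b1)

lemma InS.orth {a b : ℝ} (hab : a < b) {u : ℝ → ℂ} (hu : InS a b u)
    {c d : ℝ} (hcd : c < d) {v : ℝ → ℂ} (hv : InS c d v)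
    (hd : Disjoint (Icc a b) (Icc c d)) :
    ∫ y, u y * (starRingEnd ℂ) (v y) = 0 := by
  induction hu with
  | wp η x hη =>
    induction hv with
    | wp θ x' hθ => exact orth_wp η θ hη hθ a b c d hab hcd hd x x'
    | add v w h1 h2 e1 e2 =>
      simp only [map_add, mul_add]
      rw [integral_add ((InS.wp η x hη).integrable_mul hab hcd h1)
        ((InS.wp η x hη).integrable_mul hab hcd h2), e1, e2, add_zero]
    | smul k v h1 e1 =>
      simp only [map_mul]
      simp_rw [mul_left_comm]
      rw [integral_const_mul, e1, mul_zero]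
  | add u w h1 h2 e1 e2 =>
    simp only [add_mul]
    rw [integral_add (h1.integrable_mul hab hcd hv) (h2.integrable_mul hab hcd hv), e1, e2, add_zero]
  | smul k v h1 e1 =>
    simp_rw [mul_assoc]
    rw [integral_const_mul, e1, mul_zero]

lemma orth_sum {N : ℕ} (u : Fin N → ℝ → ℂ)
    (hi : ∀ m n, Integrable (fun y => u m y * (starRingEnd ℂ) (u n y)))
    (ho : ∀ m n, m ≠ n → ∫ y, u m y * (starRingEnd ℂ) (u n y) = 0) :
    ∫⁻ y, ‖∑ m, u m y‖ₑ ^ 2 = ∑ m, ∫⁻ y, ‖u m y‖ₑ ^ 2 := by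
  have cv : ∀ v : ℝ → ℂ, Integrable (fun y => v y * (starRingEnd ℂ) (v y)) →
      ∫⁻ y, ‖v y‖ₑ ^ 2 = ENNReal.ofReal (∫ y, v y * (starRingEnd ℂ) (v y)).re ∧
      0 ≤ (∫ y, v y * (starRingEnd ℂ) (v y)).re := by
    intro v hv
    have e : ∀ y, v y * (starRingEnd ℂ) (v y) = ((‖v y‖ ^ 2 : ℝ) : ℂ) := by
      intro y; rw [Complex.mul_conj, Complex.normSq_eq_norm_sq]
    have hv' : Integrable (fun y => ‖v y‖ ^ 2) := by
      refine hv.norm.congr (Filter.Eventually.of_forall fun y => ?_)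
      simp [pow_two]
    simp_rw [e]
    rw [integral_complex_ofReal, Complex.ofReal_re, ofReal_integral_eq_lintegral_ofReal hv' (Filter.Eventually.of_forall fun y => by positivity)]
    refine ⟨?_, integral_nonneg fun y => by positivity⟩
    congr 1; ext y
    rw [ENNReal.ofReal_pow (norm_nonneg _), ofReal_norm]
  have e1 : ∀ y, (∑ m, u m y) * (starRingEnd ℂ) (∑ m, u m y) = ∑ m, ∑ n, u m y * (starRingEnd ℂ) (u n y) := by
    intro y; rw [map_sum, Finset.sum_mul_sum]
  have i1 : Integrable (fun y => (∑ m, u m y) * (starRingEnd ℂ) (∑ m, u m y)) := by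
    simp_rw [e1]
    exact integrable_finsetSum _ fun m _ => integrable_finsetSum _ fun n _ => hi m n
  rw [(cv _ i1).1]
  simp_rw [e1]
  rw [integral_finsetSum _ (fun m _ => integrable_finsetSum _ fun n _ => hi m n)]
  have e2 : ∀ m, ∫ y, ∑ n, u m y * (starRingEnd ℂ) (u n y) = ∫ y, u m y * (starRingEnd ℂ) (u m y) := by
    intro m
    rw [integral_finsetSum _ (fun n _ => hi m n), Finset.sum_eq_single m]
    · intro n _ hn; exact ho m n hn.symm
    · simp
  simp_rw [e2]
  rw [Complex.re_sum, ENNReal.ofReal_sum_of_nonneg (fun m _ => (cv _ (hi m m)).2)]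
  exact Finset.sum_congr rfl fun m _ => ((cv _ (hi m m)).1).symm

/-- Cauchy–Schwarz with weight -/
lemma cs_weight (G : ℝ → ℂ) (hG : Continuous G) (x r : ℝ) (hr : 0 < r) (A : ℝ≥0∞)
    (h : ∫⁻ y, ‖((y - x : ℝ) : ℂ) * G y‖ₑ ^ 2 ≤ A * ENNReal.ofReal r) :
    ∫⁻ y in {y | r ≤ |y - x|}, ‖G y‖ₑ ≤ (2 * A) ^ (1/2 : ℝ) := by
  set S := {y : ℝ | r ≤ |y - x|} with hS
  have hSm : MeasurableSet S := measurableSet_le measurable_const (by fun_prop)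
  have w : ∫⁻ y in S, (ENNReal.ofReal |y - x|⁻¹) ^ (2:ℝ) ≤ 2 * ENNReal.ofReal r⁻¹ := by
    have base : ∫⁻ t in Ici r, ENNReal.ofReal (t ^ (-2:ℝ)) = ENNReal.ofReal r⁻¹ := by
      rw [restrict_Ioi_eq_restrict_Ici.symm, ← ofReal_integral_eq_lintegral_ofReal (integrableOn_Ioi_rpow_of_lt (by norm_num) hr)]
      · rw [integral_Ioi_rpow_of_lt (by norm_num) hr]
        congr 1
        norm_num
        rw [Real.rpow_neg_one]
      · exact (ae_restrict_mem measurableSet_Ioi).mono fun t ht => Real.rpow_nonneg (hr.le.trans (le_of_lt ht)) _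
    have sub : S ⊆ {y | r ≤ y - x} ∪ {y | r ≤ x - y} := by
      intro y hy
      rcases le_abs.1 (show r ≤ |y - x| from hy) with h | h
      · left; exact h
      · right; show r ≤ x - y; linarith
    have fe : ∀ y, (ENNReal.ofReal |y - x|⁻¹) ^ (2:ℝ) = ENNReal.ofReal (|y-x| ^ (-2:ℝ)) := by
      intro y
      rw [ENNReal.ofReal_rpow_of_nonneg (by positivity) (by norm_num), Real.rpow_neg (abs_nonneg _), Real.inv_rpow (abs_nonneg _)]
    simp_rw [fe]
    refine (lintegral_mono_set sub).trans ((lintegral_union_le _ _ _).trans ?_)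
    rw [two_mul]
    refine add_le_add (le_of_eq ?_) (le_of_eq ?_)
    · rw [← base, ← lintegral_indicator (measurableSet_le (by fun_prop) (by fun_prop)), ← lintegral_indicator measurableSet_Ici]
      rw [← lintegral_sub_right_eq_self ((Ici r).indicator (fun t => ENNReal.ofReal (t ^ (-2:ℝ)))) x]
      congr 1; ext y
      simp only [indicator, mem_ofPred_eq, mem_Ici]
      split_ifs with h
      · rw [abs_of_pos (by linarith)]
      · rfl
    · rw [← base, ← lintegral_indicator (measurableSet_le (by fun_prop) (by fun_prop)), ← lintegral_indicator measurableSet_Ici]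
      rw [← lintegral_sub_left_eq_self ((Ici r).indicator (fun t => ENNReal.ofReal (t ^ (-2:ℝ)))) x]
      congr 1; ext y
      simp only [indicator, mem_ofPred_eq, mem_Ici]
      split_ifs with h
      · rw [abs_of_neg (by linarith), neg_sub]
      · rfl
  calc ∫⁻ y in S, ‖G y‖ₑ ≤ ∫⁻ y in S, ((fun y => ‖((y - x : ℝ) : ℂ) * G y‖ₑ) * (fun y => ENNReal.ofReal |y - x|⁻¹)) y := by
        refine setLIntegral_mono' hSm fun y hy => ?_
        have hy' : 0 < |y - x| := hr.trans_le hy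
        simp only [Pi.mul_apply]
        rw [enorm_mul, ← ofReal_norm ((y - x : ℝ) : ℂ), Complex.norm_real, Real.norm_eq_abs, mul_right_comm,
          ← ENNReal.ofReal_mul (abs_nonneg _), mul_inv_cancel₀ hy'.ne', ENNReal.ofReal_one, one_mul]
    _ ≤ (∫⁻ y in S, ‖((y - x : ℝ) : ℂ) * G y‖ₑ ^ (2:ℝ)) ^ (1/(2:ℝ)) * (∫⁻ y in S, (ENNReal.ofReal |y - x|⁻¹) ^ (2:ℝ)) ^ (1/(2:ℝ)) := by
        refine ENNReal.lintegral_mul_le_Lp_mul_Lq _ Real.HolderConjugate.two_two ?_ ?_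
        · exact (Continuous.enorm (by fun_prop)).aemeasurable
        · fun_prop
    _ ≤ (A * ENNReal.ofReal r) ^ (1/(2:ℝ)) * (2 * ENNReal.ofReal r⁻¹) ^ (1/(2:ℝ)) := by
        refine mul_le_mul' (ENNReal.rpow_le_rpow ?_ (by norm_num)) (ENNReal.rpow_le_rpow w (by norm_num))
        refine (setLIntegral_le_lintegral _ _).trans ?_
        simpa using h
    _ = (2 * A) ^ (1/2 : ℝ) := by
        rw [← ENNReal.mul_rpow_of_nonneg _ _ (by norm_num)]
        congr 1
        have : ENNReal.ofReal r * ENNReal.ofReal r⁻¹ = 1 := by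
          rw [← ENNReal.ofReal_mul hr.le, mul_inv_cancel₀ hr.ne', ENNReal.ofReal_one]
        calc _ = (2 * A) * (ENNReal.ofReal r * ENNReal.ofReal r⁻¹) := by ring
          _ = _ := by rw [this, mul_one]

noncomputable def kk (φ : ℝ → ℂ) (a b x y : ℝ) : ℂ := ((b - a : ℝ) : ℂ) * wp φ a (b - a) x y

lemma lintegral_dil (F : ℝ → ℝ≥0∞) (l x : ℝ) (hl : 0 < l) :
    ∫⁻ y, F (l * (x - y)) = ENNReal.ofReal l⁻¹ * ∫⁻ t, F t := by
  rw [lintegral_sub_left_eq_self (fun z => F (l * z)) x]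
  have := Real.map_volume_mul_left hl.ne'
  have e := (Homeomorph.mulLeft₀ l hl.ne').toMeasurableEquiv.measurableEmbedding.lintegral_map (μ := volume) F
  have e2 : Measure.map (⇑(Homeomorph.mulLeft₀ l hl.ne').toMeasurableEquiv) volume = ENNReal.ofReal |l⁻¹| • (volume : Measure ℝ) := this
  rw [e2, lintegral_smul_measure, abs_of_pos (inv_pos.2 hl)] at e
  exact e.symm

lemma block {N : ℕ} (a b : Fin N → ℝ) (hab : ∀ m, a m < b m)
    (hd : ∀ m m', m ≠ m' → Disjoint (Icc (a m) (b m)) (Icc (a m') (b m')))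
    (u G : Fin N → ℝ → ℂ) (hu : ∀ m, InS (a m) (b m) (u m)) (hG : ∀ m, Continuous (G m))
    (x r : ℝ) (hr : 0 < r) (A : ℝ≥0∞) (w : Fin N → ℂ) (v : EuclideanSpace ℂ (Fin N))
    (hw : ∀ m, ‖w m‖ₑ ≤ ‖v m‖ₑ)
    (hGu : ∀ m y, ((y - x : ℝ) : ℂ) * G m y = u m y)
    (hA : ∀ m, w m ≠ 0 → ∫⁻ y, ‖u m y‖ₑ ^ 2 ≤ A * ENNReal.ofReal r) :
    ∫⁻ y in {y | r ≤ |y - x|}, ‖∑ m, w m * G m y‖ₑ ≤ (2 * A) ^ (1/2 : ℝ) * ‖v‖ₑ := by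
  have hv : ∑ m, ‖v m‖ₑ ^ 2 = ‖v‖ₑ ^ 2 := by
    have := EuclideanSpace.norm_sq_eq v
    rw [← ofReal_norm v, ← ENNReal.ofReal_pow (norm_nonneg _), this, ENNReal.ofReal_sum_of_nonneg (fun _ _ => by positivity)]
    refine Finset.sum_congr rfl fun m _ => ?_
    rw [ENNReal.ofReal_pow (norm_nonneg _), ofReal_norm]
  have h1 := cs_weight (fun y => ∑ m, w m * G m y) (by fun_prop) x r hr (A * ‖v‖ₑ ^ 2) ?_
  · refine h1.trans (le_of_eq ?_)
    rw [← mul_assoc, ENNReal.mul_rpow_of_nonneg _ _ (by norm_num : (0:ℝ) ≤ 1/2)]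
    congr 1
    rw [← ENNReal.rpow_natCast, ← ENNReal.rpow_mul]
    norm_num
  · have e1 : ∀ y, ((y - x : ℝ) : ℂ) * ∑ m, w m * G m y = ∑ m, w m * u m y := by
      intro y
      rw [Finset.mul_sum]
      refine Finset.sum_congr rfl fun m _ => ?_
      rw [← hGu]; ring
    simp_rw [e1]
    have hS : ∀ m, InS (a m) (b m) (fun y => w m * u m y) := fun m => InS.smul _ _ (hu m)
    rw [orth_sum (fun m y => w m * u m y) (fun m n => (hS m).integrable_mul (hab m) (hab n) (hS n))
      (fun m n hmn => (hS m).orth (hab m) (hab n) (hS n) (hd m n hmn))]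
    rw [← hv, Finset.mul_sum, Finset.sum_mul]
    refine Finset.sum_le_sum fun m _ => ?_
    by_cases h0 : w m = 0
    · simp [h0]
    · simp_rw [enorm_mul, mul_pow]
      rw [lintegral_const_mul' _ _ (by finiteness)]
      calc _ ≤ ‖v m‖ₑ ^ 2 * (A * ENNReal.ofReal r) := by
            gcongr
            · exact hw m
            · exact hA m h0
        _ = _ := by ring

lemma enorm_wp (η : ℝ → ℂ) (a l x y : ℝ) : ‖wp η a l x y‖ₑ = ‖η (l * (x - y))‖ₑ := by
  rw [wp, enorm_mul, ← ofReal_norm, norm_e2pi]; simp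

lemma kk_continuous (φ : ℝ → ℂ) (hφ : Continuous φ) (a b x : ℝ) : Continuous (kk φ a b x) :=
  continuous_const.mul (wp_continuous _ hφ _ _ _)

lemma enorm_sq_add_le (z w : ℂ) : ‖z + w‖ₑ ^ 2 ≤ 2 * (‖z‖ₑ ^ 2 + ‖w‖ₑ ^ 2) := by
  have : ‖z + w‖ ^ 2 ≤ 2 * (‖z‖^2 + ‖w‖^2) := by
    nlinarith [norm_add_le z w, norm_nonneg (z+w), sq_nonneg (‖z‖ - ‖w‖), norm_nonneg z, norm_nonneg w]
  have := ENNReal.ofReal_le_ofReal this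
  rw [ENNReal.ofReal_mul (by norm_num), ENNReal.ofReal_add (by positivity) (by positivity)] at this
  simpa [ENNReal.ofReal_pow] using this

theorem hormander (φ : SchwartzMap ℝ ℂ) (hφ : Function.support (𝓕 ⇑φ) ⊆ Icc 0 1) :
    ∃ A : ℝ≥0∞, A ≠ ∞ ∧ ∀ (N : ℕ) (a b : Fin N → ℝ), (∀ m, a m < b m) →
      (∀ m m', m ≠ m' → Disjoint (Icc (a m) (b m)) (Icc (a m') (b m'))) →
      ∀ (x c r : ℝ), 0 < r → |x - c| ≤ r → ∀ v : EuclideanSpace ℂ (Fin N),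
        ∫⁻ y in {y | 2 * r ≤ |y - c|}, ‖∑ m, (kk φ (a m) (b m) x y - kk φ (a m) (b m) c y) * v m‖ₑ
          ≤ A * ‖v‖ₑ := by
  obtain ⟨φ1, h1, hs1⟩ := exists_mulX φ hφ
  have sq_fin : ∀ η : SchwartzMap ℝ ℂ, ∫⁻ t, ‖η t‖ₑ ^ 2 ≠ ∞ := by
    intro η
    have := (η.memLp 2 volume).eLpNorm_lt_top
    have h := lintegral_rpow_enorm_lt_top_of_eLpNorm_lt_top (by norm_num) (by norm_num) this
    simpa using h.ne
  have c1f : ∫⁻ t, ‖φ1 t‖ₑ ≠ ∞ := φ1.integrable.2.ne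
  obtain ⟨D, hD⟩ : ∃ D : ℝ≥0, LipschitzWith D φ1 := by
    refine ⟨((SchwartzMap.seminorm ℝ 0 1) φ1).toNNReal, lipschitzWith_of_nnnorm_deriv_le φ1.differentiable fun t => ?_⟩
    rw [← NNReal.coe_le_coe, Real.coe_toNNReal _ (apply_nonneg _ _)]
    have := SchwartzMap.le_seminorm ℝ 0 1 φ1 t
    simpa [norm_iteratedFDeriv_eq_norm_iteratedDeriv] using this
  set c1 := ∫⁻ t, ‖φ1 t‖ₑ
  set c2 := ∫⁻ t, ‖φ1 t‖ₑ ^ 2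
  set d2 := ∫⁻ t, ‖φ t‖ₑ ^ 2
  have hc2 : c2 ≠ ∞ := sq_fin φ1
  have hd2 : d2 ≠ ∞ := sq_fin φ
  set A1 : ℝ≥0∞ := 2 * (2 * D * c1 + d2)
  refine ⟨(2 * A1) ^ (1/2:ℝ) + ((2 * c2) ^ (1/2:ℝ) + (2 * c2) ^ (1/2:ℝ)), ?_, ?_⟩
  · have : A1 ≠ ∞ := by finiteness
    have := ENNReal.rpow_ne_top_of_nonneg (by norm_num : (0:ℝ) ≤ 1/2) (by finiteness : 2 * A1 ≠ ∞)
    have := ENNReal.rpow_ne_top_of_nonneg (by norm_num : (0:ℝ) ≤ 1/2) (by finiteness : 2 * c2 ≠ ∞)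
    finiteness
  intro N a b hab hd x c r hr hxc v
  set l : Fin N → ℝ := fun m => b m - a m with hl
  have lpos : ∀ m, 0 < l m := fun m => sub_pos.2 (hab m)
  have id1 : ∀ m x y, ((y - x : ℝ) : ℂ) * kk φ (a m) (b m) x y = -1 * wp φ1 (a m) (b m - a m) x y := by
    intro m x y
    rw [kk, wp, wp, h1]; push_cast; ring
  set w1 : Fin N → ℂ := fun m => if l m * r ≤ 1 then v m else 0
  set w2 : Fin N → ℂ := fun m => if l m * r ≤ 1 then 0 else v m
  have kc : ∀ m x, Continuous (kk φ (a m) (b m) x) := fun m x => kk_continuous _ φ.continuous _ _ _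
  have P1 : ∫⁻ y in {y | r ≤ |y - c|}, ‖∑ m, w1 m * (kk φ (a m) (b m) x y - kk φ (a m) (b m) c y)‖ₑ
      ≤ (2 * A1) ^ (1/2:ℝ) * ‖v‖ₑ := by
    refine block a b hab hd (fun m y => (-1 * wp φ1 (a m) (b m - a m) x y + wp φ1 (a m) (b m - a m) c y) + 
      (((x - c) * (b m - a m) : ℝ) : ℂ) * wp φ (a m) (b m - a m) x y) _ ?_ ?_ c r hr A1 w1 v ?_ ?_ ?_
    · intro m
      exact InS.add _ _ (InS.add _ _ (InS.smul _ _ (InS.wp _ _ hs1)) (InS.wp _ _ hs1)) (InS.smul _ _ (InS.wp _ _ hφ))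
    · intro m; exact (kc m x).sub (kc m c)
    · intro m; simp only [w1]; split_ifs <;> simp
    · intro m y
      have := id1 m x y
      rw [mul_sub, id1 m c y, show ((y - c : ℝ) : ℂ) = ((y - x : ℝ) : ℂ) + ((x - c : ℝ) : ℂ) by push_cast; ring, add_mul, this, kk]
      push_cast; ring
    · intro m hm
      have hm' : l m * r ≤ 1 := by
        by_contra h; exact hm (if_neg h)
      have lm := lpos m
      have linv : ENNReal.ofReal (l m) * ENNReal.ofReal (l m)⁻¹ = 1 := by
        rw [← ENNReal.ofReal_mul lm.le, mul_inv_cancel₀ lm.ne', ENNReal.ofReal_one]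
      have b1 : ∫⁻ y, ‖-1 * wp φ1 (a m) (b m - a m) x y + wp φ1 (a m) (b m - a m) c y‖ₑ ^ 2 ≤ (2 * D * c1) * ENNReal.ofReal r := by
        calc _ ≤ ∫⁻ y, (D * (ENNReal.ofReal (l m) * ENNReal.ofReal r)) * (‖φ1 (l m * (x - y))‖ₑ + ‖φ1 (l m * (c - y))‖ₑ) := by
              refine lintegral_mono fun y => ?_
              rw [pow_two]
              refine mul_le_mul' ?_ ?_
              · have : -1 * wp φ1 (a m) (b m - a m) x y + wp φ1 (a m) (b m - a m) c y = 
                  e2pi (-(a m * y)) * (φ1 (l m * (c - y)) - φ1 (l m * (x - y))) := by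
                  simp only [wp, hl]; ring
                rw [this, enorm_mul, ← ofReal_norm (e2pi _), norm_e2pi, ENNReal.ofReal_one, one_mul, ← edist_eq_enorm_sub]
                refine (hD _ _).trans ?_
                gcongr
                rw [edist_dist, ← ENNReal.ofReal_mul lm.le]
                apply ENNReal.ofReal_le_ofReal
                rw [Real.dist_eq, ← mul_sub, abs_mul, abs_of_pos lm]
                gcongr
                rw [show c - y - (x - y) = -(x - c) by ring, abs_neg]
                exact hxc
              · refine (enorm_add_le _ _).trans ?_
                rw [enorm_mul, enorm_wp, enorm_wp]; simp [hl]
          _ = (D * (ENNReal.ofReal (l m) * ENNReal.ofReal r)) * (ENNReal.ofReal (l m)⁻¹ * c1 + ENNReal.ofReal (l m)⁻¹ * c1) := by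
              rw [lintegral_const_mul' _ _ (by finiteness), lintegral_add_left (show Measurable (fun y => ‖φ1 (l m * (x - y))‖ₑ) from (φ1.continuous.comp (by fun_prop)).enorm.measurable), lintegral_dil (fun t => ‖φ1 t‖ₑ) _ _ lm,
                lintegral_dil (fun t => ‖φ1 t‖ₑ) _ _ lm]
          _ = 2 * D * c1 * ENNReal.ofReal r * (ENNReal.ofReal (l m) * ENNReal.ofReal (l m)⁻¹) := by ring
          _ = _ := by rw [linv, mul_one]
      have b2 : ∫⁻ y, ‖(((x - c) * (b m - a m) : ℝ) : ℂ) * wp φ (a m) (b m - a m) x y‖ₑ ^ 2 ≤ d2 * ENNReal.ofReal r := by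
        simp_rw [enorm_mul, mul_pow, enorm_wp]
        rw [lintegral_const_mul' _ _ (by finiteness), lintegral_dil (fun t => ‖φ t‖ₑ ^ 2) _ _ lm, ← mul_assoc, mul_comm]
        refine mul_le_mul' le_rfl ?_
        rw [← ofReal_norm, Complex.norm_real, ← ENNReal.ofReal_pow (norm_nonneg _), ← ENNReal.ofReal_mul (by positivity)]
        apply ENNReal.ofReal_le_ofReal
        rw [Real.norm_eq_abs, abs_mul, abs_of_pos lm]
        rw [← div_eq_mul_inv, div_le_iff₀ lm]
        have : |x - c| ^ 2 ≤ r ^ 2 := by gcongr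
        calc (|x - c| * l m) ^ 2 ≤ r ^ 2 * (l m) ^ 2 := by rw [mul_pow]; gcongr
          _ = (r * l m) * (l m * r) := by ring
          _ ≤ (r * l m) * 1 := by gcongr
          _ = _ := by ring
      calc _ ≤ ∫⁻ y, 2 * (‖-1 * wp φ1 (a m) (b m - a m) x y + wp φ1 (a m) (b m - a m) c y‖ₑ ^ 2 + ‖(((x - c) * (b m - a m) : ℝ) : ℂ) * wp φ (a m) (b m - a m) x y‖ₑ ^ 2) := 
            lintegral_mono fun y => enorm_sq_add_le _ _
        _ ≤ 2 * ((2 * D * c1) * ENNReal.ofReal r + d2 * ENNReal.ofReal r) := by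
            rw [lintegral_const_mul' _ _ (by finiteness), lintegral_add_left]
            · gcongr
            · have := wp_continuous _ φ1.continuous (a m) (b m - a m)
              have := this x
              have := wp_continuous _ φ1.continuous (a m) (b m - a m) c
              fun_prop
        _ = _ := by simp only [A1]; ring
  have P2 : ∀ z, ∫⁻ y in {y | r ≤ |y - z|}, ‖∑ m, w2 m * kk φ (a m) (b m) z y‖ₑ ≤ (2 * c2) ^ (1/2:ℝ) * ‖v‖ₑ := by
    intro z
    refine block a b hab hd (fun m y => -1 * wp φ1 (a m) (b m - a m) z y) _ ?_ (fun m => kc m z) z r hr c2 w2 v ?_ (fun m y => id1 m z y) ?_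
    · intro m; exact InS.smul _ _ (InS.wp _ _ hs1)
    · intro m; simp only [w2]; split_ifs <;> simp
    · intro m hm
      have hm' : 1 < l m * r := by
        by_contra h; exact hm (if_pos (not_lt.1 h))
      simp_rw [enorm_mul, mul_pow, enorm_wp]
      have lm := lpos m
      have : ‖(-1:ℂ)‖ₑ = 1 := by simp
      simp_rw [this, one_pow, one_mul]
      rw [lintegral_dil (fun t => ‖φ1 t‖ₑ ^ 2) _ _ lm, mul_comm]
      refine mul_le_mul' le_rfl (ENNReal.ofReal_le_ofReal ?_)
      rw [inv_le_iff_one_le_mul₀' lm]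
      exact hm'.le
  have sub1 : {y | 2 * r ≤ |y - c|} ⊆ {y | r ≤ |y - c|} := by
    intro y (hy : 2 * r ≤ |y - c|)
    show r ≤ |y - c|; linarith
  have sub2 : {y | 2 * r ≤ |y - c|} ⊆ {y | r ≤ |y - x|} := by
    intro y (hy : 2 * r ≤ |y - c|)
    show r ≤ |y - x|
    have := abs_add_le (y - x) (x - c)
    rw [show y - x + (x - c) = y - c by ring] at this
    linarith
  have kc' : ∀ m x, Continuous (fun y => kk φ (a m) (b m) x y) := kc
  calc _ ≤ ∫⁻ y in {y | 2 * r ≤ |y - c|}, (‖∑ m, w1 m * (kk φ (a m) (b m) x y - kk φ (a m) (b m) c y)‖ₑ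
        + (‖∑ m, w2 m * kk φ (a m) (b m) x y‖ₑ + ‖∑ m, w2 m * kk φ (a m) (b m) c y‖ₑ)) := by
        refine lintegral_mono fun y => ?_
        have : ∑ m, (kk φ (a m) (b m) x y - kk φ (a m) (b m) c y) * v m = 
          ∑ m, w1 m * (kk φ (a m) (b m) x y - kk φ (a m) (b m) c y) + (∑ m, w2 m * kk φ (a m) (b m) x y - ∑ m, w2 m * kk φ (a m) (b m) c y) := by
          rw [← Finset.sum_sub_distrib, ← Finset.sum_add_distrib]
          refine Finset.sum_congr rfl fun m _ => ?_
          simp only [w1, w2]; split_ifs <;> ring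
        rw [this]
        refine (enorm_add_le _ _).trans ?_
        gcongr
        exact enorm_sub_le
    _ ≤ _ := by
        rw [lintegral_add_left (by fun_prop), lintegral_add_left (by fun_prop), add_mul, add_mul]
        exact add_le_add ((lintegral_mono_set sub1).trans P1)
          (add_le_add ((lintegral_mono_set sub2).trans (P2 x)) ((lintegral_mono_set sub1).trans (P2 c)))

lemma kk_continuous2 (φ : SchwartzMap ℝ ℂ) (a b : ℝ) : Continuous (fun p : ℝ × ℝ => kk φ a b p.1 p.2) := by
  unfold kk wp
  have := continuous_e2pi
  have := φ.continuous
  fun_prop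

lemma kk_bdd (φ : SchwartzMap ℝ ℂ) (a b : ℝ) : ∃ M, ∀ x y, ‖kk φ a b x y‖ ≤ M := by
  refine ⟨|b - a| * (SchwartzMap.seminorm ℝ 0 0) φ, fun x y => ?_⟩
  rw [kk, norm_mul, wp, norm_mul, norm_e2pi, one_mul, Complex.norm_real, Real.norm_eq_abs]
  gcongr
  exact SchwartzMap.norm_le_seminorm ℝ φ _

lemma kk_prod_integrable (φ : SchwartzMap ℝ ℂ) (a b : ℝ) (hab : a < b) (g h : ℝ → ℂ) (hg : Integrable g)
    (hh : AEStronglyMeasurable h) (M : ℝ) (hM : ∀ y, ‖h y‖ ≤ M) :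
    Integrable (fun p : ℝ × ℝ => kk φ a b p.2 p.1 * g p.2 * h p.1) (volume.prod volume) := by
  have lp : 0 < b - a := sub_pos.2 hab
  have i1 : Integrable (fun t : ℝ => ((b - a : ℝ) : ℂ) * φ (-((b - a) * t))) := by
    have := (φ.integrable (μ := volume)).comp_mul_left' (neg_ne_zero.2 lp.ne')
    simpa only [neg_mul] using this.const_mul ((b - a : ℝ) : ℂ)
  have := hg.convolution_integrand (ContinuousLinearMap.mul ℂ ℂ) i1
  have h2 : Integrable (fun p : ℝ × ℝ => (e2pi (-(a * p.1)) * h p.1) * ((ContinuousLinearMap.mul ℂ ℂ) (g p.2)) (((b - a : ℝ) : ℂ) * φ (-((b - a) * (p.1 - p.2))))) (volume.prod volume) := by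
    refine this.bdd_mul (c := M) ?_ ?_
    · refine AEStronglyMeasurable.mul ?_ hh.comp_fst
      exact (continuous_e2pi.comp (by fun_prop)).aestronglyMeasurable
    · refine Filter.Eventually.of_forall fun p => ?_
      rw [norm_mul, norm_e2pi, one_mul]; exact hM _
  refine h2.congr (Filter.Eventually.of_forall fun p => ?_)
  simp only [ContinuousLinearMap.mul_apply', kk, wp]
  rw [show -((b - a) * (p.1 - p.2)) = (b - a) * (p.2 - p.1) by ring]
  ring

lemma kk_fub (φ : SchwartzMap ℝ ℂ) (a b : ℝ) (hab : a < b) (g h : ℝ → ℂ) (hg : Integrable g)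
    (hh : AEStronglyMeasurable h) (M : ℝ) (hM : ∀ y, ‖h y‖ ≤ M) :
    ∫ y, (∫ x, kk φ a b x y * g x) * h y = ∫ x, g x * ∫ y, kk φ a b x y * h y := by
  have := integral_integral_swap (f := fun y x => kk φ a b x y * g x * h y) (kk_prod_integrable φ a b hab g h hg hh M hM)
  simp_rw [← integral_mul_const, ← integral_const_mul]
  rw [this]
  congr 1; ext x; congr 1; ext y; ring

lemma kk_int_props (φ : SchwartzMap ℝ ℂ) (a b : ℝ) (hab : a < b) (g : ℝ → ℂ) (hg : Integrable g) :
    Continuous (fun y => ∫ x, kk φ a b x y * g x) ∧ Integrable (fun y => ∫ x, kk φ a b x y * g x) ∧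
    ∃ M, ∀ y, ‖∫ x, kk φ a b x y * g x‖ ≤ M := by
  obtain ⟨M, hM⟩ := kk_bdd φ a b
  have kc := kk_continuous2 φ a b
  refine ⟨?_, ?_, ∫ x, M * ‖g x‖, ?_⟩
  · refine continuous_of_dominated (bound := fun x => M * ‖g x‖) ?_ ?_ (hg.norm.const_mul M) ?_
    · intro y
      exact (kc.comp (by fun_prop : Continuous fun x : ℝ => (x, y))).aestronglyMeasurable.mul hg.1
    · intro y
      refine Filter.Eventually.of_forall fun x => ?_
      rw [norm_mul]; gcongr; exact hM _ _
    · refine Filter.Eventually.of_forall fun x => ?_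
      exact (kc.comp (by fun_prop : Continuous fun y : ℝ => (x, y))).mul continuous_const
  · have := kk_prod_integrable φ a b hab g (fun _ => 1) hg aestronglyMeasurable_const 1 (by simp)
    simpa using this.integral_prod_left
  · intro y
    refine norm_integral_le_of_norm_le (hg.norm.const_mul M) (Filter.Eventually.of_forall fun x => ?_)
    rw [norm_mul]; gcongr; exact hM _ _

lemma lintegral_dil' (F : ℝ → ℝ≥0∞) (l x : ℝ) (hl : 0 < l) :
    ∫⁻ y, F (l * (y - x)) = ENNReal.ofReal l⁻¹ * ∫⁻ t, F t := by
  rw [lintegral_sub_right_eq_self (fun z => F (l * z)) x]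
  have := lintegral_dil F l 0 hl
  rw [← this, ← lintegral_neg_eq_self]
  simp

lemma kk_young (φ : SchwartzMap ℝ ℂ) (a b : ℝ) (hab : a < b) (g : ℝ → ℂ) (hg : Integrable g) :
    ∫⁻ y, ‖∫ x, kk φ a b x y * g x‖ₑ ^ 2 ≤ (∫⁻ t, ‖φ t‖ₑ) ^ 2 * ∫⁻ x, ‖g x‖ₑ ^ 2 := by
  have lp : 0 < b - a := sub_pos.2 hab
  have linv : ENNReal.ofReal (b - a) * ENNReal.ofReal (b - a)⁻¹ = 1 := by
    rw [← ENNReal.ofReal_mul lp.le, mul_inv_cancel₀ lp.ne', ENNReal.ofReal_one]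
  set c := ∫⁻ t, ‖φ t‖ₑ
  have kc := kk_continuous2 φ a b
  have ek : ∀ x y, ‖kk φ a b x y‖ₑ = ENNReal.ofReal (b - a) * ‖φ ((b - a) * (x - y))‖ₑ := by
    intro x y
    rw [kk, enorm_mul, enorm_wp, ← ofReal_norm, Complex.norm_real, Real.norm_eq_abs, abs_of_pos lp]
  have ix : ∀ y, ∫⁻ x, ‖kk φ a b x y‖ₑ = c := by
    intro y
    simp_rw [ek]
    rw [lintegral_const_mul' _ _ (by finiteness), lintegral_dil' (fun t => ‖φ t‖ₑ) _ _ lp, ← mul_assoc, linv, one_mul]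
  have iy : ∀ x, ∫⁻ y, ‖kk φ a b x y‖ₑ = c := by
    intro y
    simp_rw [ek]
    rw [lintegral_const_mul' _ _ (by finiteness), lintegral_dil (fun t => ‖φ t‖ₑ) _ _ lp, ← mul_assoc, linv, one_mul]
  have gm := hg.1.enorm
  have step : ∀ y, ‖∫ x, kk φ a b x y * g x‖ₑ ^ 2 ≤ c * ∫⁻ x, ‖kk φ a b x y‖ₑ * ‖g x‖ₑ ^ 2 := by
    intro y
    have km : AEMeasurable (fun x => ‖kk φ a b x y‖ₑ) := (kc.comp (by fun_prop : Continuous fun x : ℝ => (x, y))).enorm.aemeasurable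
    have h1 : ‖∫ x, kk φ a b x y * g x‖ₑ ≤ ∫⁻ x, ((fun x => ‖kk φ a b x y‖ₑ ^ (1/2:ℝ)) * (fun x => ‖kk φ a b x y‖ₑ ^ (1/2:ℝ) * ‖g x‖ₑ)) x := by
      refine (enorm_integral_le_lintegral_enorm _).trans (lintegral_mono fun x => ?_)
      simp only [Pi.mul_apply]
      rw [enorm_mul, ← mul_assoc, ← ENNReal.rpow_add_of_nonneg _ _ (by norm_num) (by norm_num)]
      norm_num
    have h2 := h1.trans (ENNReal.lintegral_mul_le_Lp_mul_Lq _ Real.HolderConjugate.two_two (km.pow_const _) ((km.pow_const _).mul gm))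
    have h3 := pow_le_pow_left' h2 2
    refine h3.trans (le_of_eq ?_)
    rw [mul_pow, ← ENNReal.rpow_natCast, ← ENNReal.rpow_natCast, ← ENNReal.rpow_mul, ← ENNReal.rpow_mul]
    norm_num
    have e1 : ∀ x, (‖kk φ a b x y‖ₑ ^ (1/2:ℝ)) ^ 2 = ‖kk φ a b x y‖ₑ := by
      intro x
      rw [← ENNReal.rpow_natCast, ← ENNReal.rpow_mul]; norm_num
    simp_rw [mul_pow, e1]
    rw [ix]
  calc _ ≤ ∫⁻ y, c * ∫⁻ x, ‖kk φ a b x y‖ₑ * ‖g x‖ₑ ^ 2 := lintegral_mono step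
    _ = c * ∫⁻ y, ∫⁻ x, ‖kk φ a b x y‖ₑ * ‖g x‖ₑ ^ 2 := by
        rw [lintegral_const_mul' _ _ φ.integrable.2.ne]
    _ = c * ∫⁻ x, ∫⁻ y, ‖kk φ a b x y‖ₑ * ‖g x‖ₑ ^ 2 := by
        rw [lintegral_lintegral_swap]
        refine AEMeasurable.mul (f := fun p : ℝ × ℝ => ‖kk φ a b p.2 p.1‖ₑ) (g := fun p : ℝ × ℝ => ‖g p.2‖ₑ ^ 2) ?_ ?_
        · exact (kc.comp (by fun_prop : Continuous fun p : ℝ × ℝ => (p.2, p.1))).enorm.aemeasurable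
        · exact (gm.pow_const 2).comp_quasiMeasurePreserving Measure.quasiMeasurePreserving_snd
    _ = c * ∫⁻ x, c * ‖g x‖ₑ ^ 2 := by
        congr 2; ext x
        rw [lintegral_mul_const' _ _ (by finiteness), iy]
    _ = _ := by
        rw [lintegral_const_mul' _ _ φ.integrable.2.ne]; ring

lemma sum_enorm_sq {N : ℕ} (v : EuclideanSpace ℂ (Fin N)) : ∑ m, ‖v m‖ₑ ^ 2 = ‖v‖ₑ ^ 2 := by
  have := EuclideanSpace.norm_sq_eq v
  rw [← ofReal_norm v, ← ENNReal.ofReal_pow (norm_nonneg _), this, ENNReal.ofReal_sum_of_nonneg (fun _ _ => by positivity)]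
  refine Finset.sum_congr rfl fun m _ => ?_
  rw [ENNReal.ofReal_pow (norm_nonneg _), ofReal_norm]

noncomputable def KK {N : ℕ} (φ : ℝ → ℂ) (a b : Fin N → ℝ) (x y : ℝ) : EuclideanSpace ℂ (Fin N) →L[ℂ] ℂ :=
  ∑ m, kk φ (a m) (b m) x y • (EuclideanSpace.proj m : EuclideanSpace ℂ (Fin N) →L[ℂ] ℂ)

lemma KK_apply {N : ℕ} (φ : ℝ → ℂ) (a b : Fin N → ℝ) (x y : ℝ) (v : EuclideanSpace ℂ (Fin N)) :
    KK φ a b x y v = ∑ m, kk φ (a m) (b m) x y * v m := by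
  simp [KK]

lemma comp_integrable {N : ℕ} (g : ℝ → EuclideanSpace ℂ (Fin N)) (hg : Integrable g) (m : Fin N) :
    Integrable (fun x => g x m) :=
  (EuclideanSpace.proj m : EuclideanSpace ℂ (Fin N) →L[ℂ] ℂ).integrable_comp hg

lemma KK_integral {N : ℕ} (φ : SchwartzMap ℝ ℂ) (a b : Fin N → ℝ) (g : ℝ → EuclideanSpace ℂ (Fin N)) (hg : Integrable g) (y : ℝ) :
    ∫ x, KK φ a b x y (g x) = ∑ m, ∫ x, kk φ (a m) (b m) x y * g x m := by
  simp_rw [KK_apply]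
  refine integral_finsetSum _ fun m _ => ?_
  obtain ⟨M, hM⟩ := kk_bdd φ (a m) (b m)
  exact (comp_integrable g hg m).bdd_mul (c := M) ((kk_continuous2 φ (a m) (b m)).comp (by fun_prop : Continuous fun x : ℝ => (x, y))).aestronglyMeasurable
    (Filter.Eventually.of_forall fun x => hM x y)

theorem KK_L2 {N : ℕ} (φ : SchwartzMap ℝ ℂ) (hφ : Function.support (𝓕 ⇑φ) ⊆ Icc 0 1) (a b : Fin N → ℝ) (hab : ∀ m, a m < b m)
    (hd : ∀ m m', m ≠ m' → Disjoint (Icc (a m) (b m)) (Icc (a m') (b m')))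
    (g : ℝ → EuclideanSpace ℂ (Fin N)) (hg : Integrable g) :
    ∫⁻ y, ‖∫ x, KK φ a b x y (g x)‖ₑ ^ 2 ≤ (∫⁻ t, ‖φ t‖ₑ) ^ 2 * ∫⁻ x, ‖g x‖ₑ ^ 2 := by
  simp_rw [KK_integral φ a b g hg, ← sum_enorm_sq]
  have gi := comp_integrable g hg
  have pr := fun m => kk_int_props φ (a m) (b m) (hab m) _ (gi m)
  rw [orth_sum (fun m y => ∫ x, kk φ (a m) (b m) x y * g x m)]
  · rw [lintegral_finsetSum' _ (fun m _ => (gi m).1.enorm.pow_const 2), Finset.mul_sum]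
    exact Finset.sum_le_sum fun m _ => kk_young φ (a m) (b m) (hab m) _ (gi m)
  · intro m n
    obtain ⟨c1, i1, M1, b1⟩ := pr m
    obtain ⟨c2, i2, M2, b2⟩ := pr n
    exact Integrable.bdd_mul (c := M1) ((LinearIsometryEquiv.integrable_comp_iff Complex.conjLIE).2 i2) c1.aestronglyMeasurable
      (Filter.Eventually.of_forall b1)
  · intro m n hmn
    obtain ⟨c1, i1, M1, b1⟩ := pr m
    obtain ⟨c2, i2, M2, b2⟩ := pr n
    rw [kk_fub φ (a m) (b m) (hab m) _ (fun y => (starRingEnd ℂ) (∫ x, kk φ (a n) (b n) x y * g x n)) (gi m) 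
      (Complex.continuous_conj.comp c2).aestronglyMeasurable M2 (fun y => by simpa using b2 y)]
    rw [← integral_zero (α := ℝ) (μ := volume) (G := ℂ)]
    congr 1; ext x
    have : ∫ y, kk φ (a m) (b m) x y * (starRingEnd ℂ) (∫ x, kk φ (a n) (b n) x y * g x n)
        = (starRingEnd ℂ) (∫ y, (∫ x, kk φ (a n) (b n) x y * g x n) * (starRingEnd ℂ) (kk φ (a m) (b m) x y)) := by
      rw [← integral_conj]; congr 1; ext y; simp [mul_comm]
    obtain ⟨M3, b3⟩ := kk_bdd φ (a m) (b m)
    rw [this, kk_fub φ (a n) (b n) (hab n) _ (fun y => (starRingEnd ℂ) (kk φ (a m) (b m) x y)) (gi n)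
      (Complex.continuous_conj.comp (kk_continuous _ φ.continuous _ _ x)).aestronglyMeasurable M3 (fun y => by simpa using b3 x y)]
    have z : ∀ x', ∫ y, kk φ (a n) (b n) x' y * (starRingEnd ℂ) (kk φ (a m) (b m) x y) = 0 := by
      intro x'
      exact InS.orth (hab n) (InS.smul _ _ (InS.wp φ x' hφ)) (hab m) (InS.smul _ _ (InS.wp φ x hφ)) (hd n m hmn.symm)
    simp [z]

lemma cz_decomp (G : ℝ → ℝ) (hGc : Continuous G) (hG0 : ∀ x, 0 ≤ G x) (hGi : Integrable G) (t : ℝ) (ht : 0 < t) :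
    ∃ (S : Set (ℤ × ℤ)) (c r : S → ℝ), (∀ i, 0 < r i) ∧
      Pairwise (Disjoint on fun i => Ico (c i) (c i + r i)) ∧
      (∀ i, t * r i < ∫ x in Ico (c i) (c i + r i), G x) ∧
      (∀ i, ∫ x in Ico (c i) (c i + r i), G x ≤ 2 * t * r i) ∧
      ∀ x, x ∉ ⋃ i, Ico (c i) (c i + r i) → G x ≤ t := by
  -- dyadic intervals
  set D : ℤ → ℤ → Set ℝ := fun n k => Ico ((k:ℝ) * 2 ^ (-n)) ((k:ℝ) * 2 ^ (-n) + 2 ^ (-n)) with hD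
  have p2 : ∀ n : ℤ, (0:ℝ) < 2 ^ n := fun n => by positivity
  have memD : ∀ n k x, x ∈ D n k ↔ ⌊x * 2 ^ n⌋ = k := by
    intro n k x
    have e : (2:ℝ) ^ (-n) * 2 ^ n = 1 := by rw [← zpow_add₀ (by norm_num)]; simp
    rw [Int.floor_eq_iff, hD]
    simp only [mem_Ico]
    have h1 : (k:ℝ) * 2 ^ (-n) ≤ x ↔ (k:ℝ) ≤ x * 2 ^ n := by
      rw [← mul_le_mul_iff_left₀ (p2 n), mul_assoc, e, mul_one]
    have h2 : x < (k:ℝ) * 2 ^ (-n) + 2 ^ (-n) ↔ x * 2 ^ n < k + 1 := by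
      rw [← mul_lt_mul_iff_left₀ (p2 n), add_mul, mul_assoc, e, mul_one]
    rw [h1, h2]
  have anc : ∀ (n : ℤ) (d : ℕ) (x : ℝ), ⌊x * 2 ^ (n - d)⌋ = ⌊x * 2 ^ n⌋ / 2 ^ d := by
    intro n d x
    have := Int.floor_div_natCast (x * 2 ^ n) (2 ^ d)
    push_cast at this
    rw [← this, zpow_sub₀ (by norm_num), zpow_natCast, mul_div_assoc]
  set I : ℤ → ℤ → ℝ := fun n k => ∫ x in D n k, G x with hI
  set S : Set (ℤ × ℤ) := {p | t * 2 ^ (-p.1) < I p.1 p.2 ∧ ∀ d : ℕ, 1 ≤ d → I (p.1 - d) (p.2 / 2 ^ d) ≤ t * 2 ^ (-(p.1 - d))} with hS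
  have mS : ∀ i : S, t * 2 ^ (-i.1.1) < I i.1.1 i.1.2 ∧ ∀ d : ℕ, 1 ≤ d → I (i.1.1 - d) (i.1.2 / 2 ^ d) ≤ t * 2 ^ (-(i.1.1 - d)) := fun i => i.2
  refine ⟨S, fun i => (i.1.2 : ℝ) * 2 ^ (-i.1.1), fun i => 2 ^ (-i.1.1), fun i => p2 _, ?_, ?_, ?_, ?_⟩
  · have key : ∀ i j : S, i.1.1 ≤ j.1.1 → ∀ x, x ∈ D i.1.1 i.1.2 → x ∈ D j.1.1 j.1.2 → i = j := by
      intro i j hij x hi hj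
      rw [memD] at hi hj
      obtain ⟨d, hd⟩ := Int.le.dest hij
      have h1 := anc j.1.1 d x
      rw [show j.1.1 - (d:ℤ) = i.1.1 by linarith, hi, hj] at h1
      rcases Nat.eq_zero_or_pos d with h0 | h0
      · subst h0
        simp at hd h1
        exact Subtype.ext (Prod.ext hd h1)
      · have h2 := (mS j).2 d h0
        rw [show j.1.1 - (d:ℤ) = i.1.1 by linarith, ← h1] at h2
        exact absurd (mS i).1 (not_lt.2 h2)
    intro i j hij
    refine Set.disjoint_left.2 fun x hi hj => hij ?_
    rcases le_total i.1.1 j.1.1 with h | h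
    · exact key i j h x hi hj
    · exact (key j i h x hj hi).symm
  · intro i; exact (mS i).1
  · intro i
    have h2 := (mS i).2 1 le_rfl
    have sub : D i.1.1 i.1.2 ⊆ D (i.1.1 - (1:ℕ)) (i.1.2 / 2 ^ 1) := by
      intro x hx
      rw [memD] at hx ⊢
      rw [anc, hx]
    have h3 : I i.1.1 i.1.2 ≤ I (i.1.1 - (1:ℕ)) (i.1.2 / 2 ^ 1) :=
      setIntegral_mono_set hGi.integrableOn (Filter.Eventually.of_forall hG0) (Filter.Eventually.of_forall sub)
    refine (h3.trans h2).trans (le_of_eq ?_)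
    rw [show -(i.1.1 - ((1:ℕ):ℤ)) = -i.1.1 + 1 by push_cast; ring, zpow_add_one₀ (by norm_num)]
    ring
  · intro x hx
    by_contra! hlt
    apply hx
    -- some small interval
    have ex : ∃ n : ℤ, t * 2 ^ (-n) < I n ⌊x * 2 ^ n⌋ := by
      obtain ⟨t', ht', ht''⟩ := exists_between hlt
      have := hGc.continuousAt.eventually (lt_mem_nhds ht'') 
      obtain ⟨ε, hε, hb⟩ := Metric.eventually_nhds_iff.1 this
      obtain ⟨n, hn⟩ := exists_pow_lt_of_lt_one hε (by norm_num : (1/2:ℝ) < 1)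
      refine ⟨n, ?_⟩
      have vol : (volume (D n ⌊x * 2 ^ (n:ℤ)⌋)).toReal = 2 ^ (-(n:ℤ)) := by
        simp [hD, Real.volume_Ico]
      have h1 : ∫ y in D n ⌊x * 2 ^ (n:ℤ)⌋, t' ≤ I n ⌊x * 2 ^ (n:ℤ)⌋ := by
        refine setIntegral_mono_on (by simp [hD]; right; positivity) hGi.integrableOn measurableSet_Ico fun y hy => ?_
        refine (hb ?_).le
        have hx' : x ∈ D n ⌊x * 2 ^ (n:ℤ)⌋ := (memD _ _ _).2 rfl
        have e : (2:ℝ) ^ (-(n:ℤ)) = (1/2) ^ n := by simp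
        simp only [hD, mem_Ico, e] at hy hx'
        rw [Real.dist_eq, abs_lt]
        constructor <;> linarith [hy.1, hy.2, hx'.1, hx'.2]
      rw [setIntegral_const, measureReal_def, vol, smul_eq_mul] at h1
      have := p2 (-(n:ℤ))
      nlinarith
    have bd : ∃ b : ℤ, ∀ z : ℤ, t * 2 ^ (-z) < I z ⌊x * 2 ^ z⌋ → b ≤ z := by
      obtain ⟨n, hn⟩ := pow_unbounded_of_one_lt ((∫ y, G y) / t) (by norm_num : (1:ℝ) < 2)
      refine ⟨-n, fun z hz => ?_⟩
      by_contra! hlt'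
      have h1 : I z ⌊x * 2 ^ z⌋ ≤ ∫ y, G y := setIntegral_le_integral hGi (Filter.Eventually.of_forall hG0)
      have h2 : (2:ℝ) ^ n ≤ 2 ^ (-z) := by
        rw [← zpow_natCast]
        exact zpow_le_zpow_right₀ (by norm_num) (by linarith)
      rw [div_lt_iff₀ ht] at hn
      nlinarith
    obtain ⟨n, hn, hmin⟩ := Int.exists_least_of_bdd bd ex
    refine mem_iUnion.2 ⟨⟨(n, ⌊x * 2 ^ n⌋), hn, ?_⟩, (memD n _ x).2 rfl⟩
    intro d hd
    simp only
    rw [← anc]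
    by_contra! hc
    have := hmin _ hc
    omega

section CZ
variable {E : Type*} [NormedAddCommGroup E] [NormedSpace ℂ E] [CompleteSpace E]

lemma cz_app_aesm (K : ℝ → ℝ → E →L[ℂ] ℂ) (hK : Continuous fun p : ℝ × ℝ => K p.1 p.2)
    (μ ν : Measure ℝ) [SFinite μ] [SFinite ν] (u : ℝ → E) (hu : AEStronglyMeasurable u μ) :
    AEStronglyMeasurable (fun p : ℝ × ℝ => K p.1 p.2 (u p.1)) (μ.prod ν) := by
  have h1 : AEStronglyMeasurable (fun p : ℝ × ℝ => u p.1) (μ.prod ν) := hu.comp_fst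
  have hb : Continuous fun q : (E →L[ℂ] ℂ) × E => q.1 q.2 := by fun_prop
  exact hb.comp_aestronglyMeasurable (hK.aestronglyMeasurable.prodMk h1)

lemma cz_app_int (K : ℝ → ℝ → E →L[ℂ] ℂ) (hK : Continuous fun p : ℝ × ℝ => K p.1 p.2) (M : ℝ)
    (hM : ∀ x y, ‖K x y‖ ≤ M) (μ : Measure ℝ) (u : ℝ → E) (hu : Integrable u μ) (y : ℝ) :
    Integrable (fun x => K x y (u x)) μ := by
  have hb : Continuous fun q : (E →L[ℂ] ℂ) × E => q.1 q.2 := by fun_prop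
  refine Integrable.mono' (hu.norm.const_mul M) ?_ (Filter.Eventually.of_forall fun x => ?_)
  · have : Continuous fun x => K x y := hK.comp (by fun_prop : Continuous fun x : ℝ => (x, y))
    exact hb.comp_aestronglyMeasurable (this.aestronglyMeasurable.prodMk hu.1)
  · exact (K x y).le_of_opNorm_le (hM x y) _

lemma cz_app_meas (K : ℝ → ℝ → E →L[ℂ] ℂ) (hK : Continuous fun p : ℝ × ℝ => K p.1 p.2)
    (μ ν : Measure ℝ) [SFinite μ] [SFinite ν] (u : ℝ → E) (hu : AEStronglyMeasurable u μ) :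
    AEStronglyMeasurable (fun y => ∫ x, K x y (u x) ∂μ) ν := by
  exact (cz_app_aesm K hK μ ν u hu).prod_swap.integral_prod_right'

lemma cz_atom (K : ℝ → ℝ → E →L[ℂ] ℂ) (hK : Continuous fun p : ℝ × ℝ => K p.1 p.2) (M : ℝ)
    (hM : ∀ x y, ‖K x y‖ ≤ M) (A : ℝ≥0∞)
    (hH : ∀ x c r, 0 < r → |x - c| ≤ r → ∀ v : E, ∫⁻ y in {y | 2 * r ≤ |y - c|}, ‖(K x y - K c y) v‖ₑ ≤ A * ‖v‖ₑ)
    (c r : ℝ) (hr : 0 < r) (u : ℝ → E) (hu : IntegrableOn u (Ico c (c + r)))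
    (hu0 : ∫ x in Ico c (c + r), u x = 0) :
    ∫⁻ y in {y | 2 * r ≤ |y - c|}, ‖∫ x in Ico c (c + r), K x y (u x)‖ₑ ≤ A * ∫⁻ x in Ico c (c + r), ‖u x‖ₑ := by
  have h1 : ∀ y, ∫ x in Ico c (c + r), K x y (u x) = ∫ x in Ico c (c + r), (K x y - K c y) (u x) := by
    intro y
    simp only [ContinuousLinearMap.sub_apply]
    rw [integral_sub (cz_app_int K hK M hM _ u hu y) ((K c y).integrable_comp hu), (K c y).integral_comp_comm hu, hu0]
    simp
  have hK' : Continuous fun p : ℝ × ℝ => K p.1 p.2 - K c p.2 :=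
    hK.sub (hK.comp (by fun_prop : Continuous fun p : ℝ × ℝ => (c, p.2)))
  calc _ ≤ ∫⁻ y in {y | 2 * r ≤ |y - c|}, ∫⁻ x in Ico c (c + r), ‖(K x y - K c y) (u x)‖ₑ := by
        refine lintegral_mono fun y => ?_
        rw [h1]
        exact enorm_integral_le_lintegral_enorm _
    _ = ∫⁻ x in Ico c (c + r), ∫⁻ y in {y | 2 * r ≤ |y - c|}, ‖(K x y - K c y) (u x)‖ₑ := by
        refine lintegral_lintegral_swap ?_
        have := (cz_app_aesm (fun x y => K x y - K c y) hK' (volume.restrict (Ico c (c+r))) (volume.restrict {y | 2 * r ≤ |y - c|}) u hu.1).enorm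
        exact this.prod_swap
    _ ≤ ∫⁻ x in Ico c (c + r), A * ‖u x‖ₑ := by
        refine setLIntegral_mono' measurableSet_Ico fun x hx => hH x c r hr ?_ _
        rw [abs_le]; constructor <;> linarith [hx.1, hx.2]
    _ = _ := lintegral_const_mul'' _ hu.1.enorm

end CZ

lemma cz_good {E : Type*} [NormedAddCommGroup E] [NormedSpace ℂ E] [CompleteSpace E]
    (g : ℝ → E) (hgc : Continuous g) (hgi : Integrable g) (t : ℝ) (ht : 0 < t) :
    ∃ (S : Set (ℤ × ℤ)) (c r : S → ℝ) (h : ℝ → E), (∀ i, 0 < r i) ∧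
      Pairwise (Disjoint on fun i => Ico (c i) (c i + r i)) ∧ Integrable h ∧
      (∀ x, x ∉ ⋃ i, Ico (c i) (c i + r i) → h x = g x) ∧
      (∀ i, ∫ x in Ico (c i) (c i + r i), (g x - h x) = 0) ∧
      (∫⁻ x in ⋃ i, Ico (c i) (c i + r i), ‖g x - h x‖ₑ ≤ 4 * ENNReal.ofReal t * volume (⋃ i, Ico (c i) (c i + r i))) ∧
      (∫⁻ x, ‖h x‖ₑ ^ 2 ≤ (∫⁻ x in {x | ‖g x‖ ≤ t}, ‖g x‖ₑ ^ 2) + 4 * ENNReal.ofReal t ^ 2 * volume (⋃ i, Ico (c i) (c i + r i))) ∧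
      (ENNReal.ofReal t * volume (⋃ i, Ico (c i) (c i + r i)) ≤ 2 * ∫⁻ x in {x | t / 2 < ‖g x‖}, ‖g x‖ₑ) := by
  classical
  obtain ⟨S, c, r, hr, hdis, hlo, hup, hoff⟩ := cz_decomp (fun x => ‖g x‖) hgc.norm (fun _ => norm_nonneg _) hgi.norm t ht
  set Q : S → Set ℝ := fun i => Ico (c i) (c i + r i) with hQ
  have mQ : ∀ i, MeasurableSet (Q i) := fun i => measurableSet_Ico
  have vQ : ∀ i, volume (Q i) = ENNReal.ofReal (r i) := fun i => by simp [hQ, Real.volume_Ico]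
  set Ω : Set ℝ := ⋃ i, Q i with hΩ
  have mΩ : MeasurableSet Ω := MeasurableSet.iUnion mQ
  have vΩ : volume Ω = ∑' i, ENNReal.ofReal (r i) := by
    rw [hΩ, measure_iUnion hdis mQ]; simp_rw [vQ]
  set avg : S → E := fun i => ((r i)⁻¹ : ℝ) • ∫ x in Q i, g x with havg
  set h : ℝ → E := fun x => if hx : ∃ i, x ∈ Q i then avg hx.choose else g x with hh
  have hin : ∀ i x, x ∈ Q i → h x = avg i := by
    intro i x hx
    have hx' : ∃ i, x ∈ Q i := ⟨i, hx⟩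
    have : hx'.choose = i := by
      by_contra hne
      exact Set.disjoint_left.1 (hdis hne) hx'.choose_spec hx
    simp only [hh, hx', dif_pos, this]
  have hout : ∀ x, x ∉ Ω → h x = g x := by
    intro x hx
    have : ¬ ∃ i, x ∈ Q i := by simpa [hΩ] using hx
    simp only [hh, this, dif_neg, not_false_iff]
  -- integral of norm as lintegral
  have gQ : ∀ i, ∫⁻ x in Q i, ‖g x‖ₑ = ENNReal.ofReal (∫ x in Q i, ‖g x‖) := by
    intro i
    rw [ofReal_integral_norm_eq_lintegral_enorm hgi.integrableOn]
  have gup : ∀ i, ∫⁻ x in Q i, ‖g x‖ₑ ≤ 2 * ENNReal.ofReal t * ENNReal.ofReal (r i) := by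
    intro i
    rw [gQ]
    refine (ENNReal.ofReal_le_ofReal (hup i)).trans (le_of_eq ?_)
    rw [ENNReal.ofReal_mul (by positivity), ENNReal.ofReal_mul (by positivity)]; simp
  have glo : ∀ i, ENNReal.ofReal t * ENNReal.ofReal (r i) ≤ ∫⁻ x in Q i, ‖g x‖ₑ := by
    intro i
    rw [gQ, ← ENNReal.ofReal_mul ht.le]
    exact ENNReal.ofReal_le_ofReal (hlo i).le
  have r0 : ∀ i, ENNReal.ofReal (r i) ≠ 0 := fun i => by simpa using hr i
  have avle : ∀ i, ‖avg i‖ₑ * ENNReal.ofReal (r i) ≤ ∫⁻ x in Q i, ‖g x‖ₑ := by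
    intro i
    have h1 : ‖avg i‖ₑ = (ENNReal.ofReal (r i))⁻¹ * ‖∫ x in Q i, g x‖ₑ := by
      simp only [havg, enorm_smul]
      rw [Real.enorm_eq_ofReal (inv_nonneg.2 (hr i).le), ENNReal.ofReal_inv_of_pos (hr i)]
    rw [h1, mul_comm, ← mul_assoc, ENNReal.mul_inv_cancel (r0 i) ENNReal.ofReal_ne_top, one_mul]
    exact enorm_integral_le_lintegral_enorm _
  have avle2 : ∀ i, ‖avg i‖ₑ ≤ 2 * ENNReal.ofReal t := by
    intro i
    exact (ENNReal.mul_le_mul_iff_left (r0 i) ENNReal.ofReal_ne_top).1 ((avle i).trans (gup i))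
  have hQn : ∀ i, ∫⁻ x in Q i, ‖h x‖ₑ ≤ ∫⁻ x in Q i, ‖g x‖ₑ := by
    intro i
    rw [setLIntegral_congr_fun (g := fun _ => ‖avg i‖ₑ) (mQ i) (fun x hx => by simp only [hin i x hx]), setLIntegral_const, vQ]
    exact avle i
  have hmeas : AEStronglyMeasurable h := by
    have h1 : AEStronglyMeasurable h (volume.restrict Ω) := by
      refine aestronglyMeasurable_iUnion_iff.2 fun i => ?_
      refine (aestronglyMeasurable_const (b := avg i)).congr ?_
      filter_upwards [ae_restrict_mem (mQ i)] with x hx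
      exact (hin i x hx).symm
    have h2 : AEStronglyMeasurable h (volume.restrict Ωᶜ) := by
      refine hgi.1.restrict.congr ?_
      filter_upwards [ae_restrict_mem mΩ.compl] with x hx
      exact (hout x hx).symm
    have := aestronglyMeasurable_union_iff.2 ⟨h1, h2⟩
    simpa using this
  have gsum : ∫⁻ x in Ω, ‖g x‖ₑ = ∑' i, ∫⁻ x in Q i, ‖g x‖ₑ := lintegral_iUnion mQ hdis _
  have hΩn : ∫⁻ x in Ω, ‖h x‖ₑ ≤ ∫⁻ x in Ω, ‖g x‖ₑ := by
    rw [gsum, lintegral_iUnion mQ hdis]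
    exact ENNReal.tsum_le_tsum hQn
  have hinteg : Integrable h := by
    refine ⟨hmeas, ?_⟩
    rw [hasFiniteIntegral_iff_enorm, ← lintegral_add_compl _ mΩ]
    refine ENNReal.add_lt_top.2 ⟨hΩn.trans_lt ((setLIntegral_le_lintegral _ _).trans_lt (hasFiniteIntegral_iff_enorm.1 hgi.2)), ?_⟩
    rw [setLIntegral_congr_fun (g := fun x => ‖g x‖ₑ) mΩ.compl (fun x hx => by simp only [hout x hx])]
    exact ((setLIntegral_le_lintegral _ _).trans_lt (hasFiniteIntegral_iff_enorm.1 hgi.2))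
  refine ⟨S, c, r, h, hr, hdis, hinteg, hout, ?_, ?_, ?_, ?_⟩
  · intro i
    rw [integral_sub hgi.integrableOn hinteg.integrableOn]
    rw [setIntegral_congr_fun (g := fun _ => avg i) (f := h) (mQ i) (fun x hx => hin i x hx), setIntegral_const, measureReal_def, vQ,
      ENNReal.toReal_ofReal (hr i).le]
    simp only [havg, smul_smul, mul_inv_cancel₀ (hr i).ne', one_smul]
    exact sub_self _
  · calc ∫⁻ x in Ω, ‖g x - h x‖ₑ ≤ ∫⁻ x in Ω, (‖g x‖ₑ + ‖h x‖ₑ) := lintegral_mono fun x => enorm_sub_le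
      _ = (∫⁻ x in Ω, ‖g x‖ₑ) + ∫⁻ x in Ω, ‖h x‖ₑ := lintegral_add_left' hgi.1.restrict.enorm _
      _ ≤ 2 * ∫⁻ x in Ω, ‖g x‖ₑ := by rw [two_mul]; gcongr
      _ ≤ 2 * ∑' i, 2 * ENNReal.ofReal t * ENNReal.ofReal (r i) := by
        rw [gsum]; gcongr with i; exact gup i
      _ = 4 * ENNReal.ofReal t * volume Ω := by
        rw [ENNReal.tsum_mul_left, ← vΩ]; ring
  · rw [← lintegral_add_compl _ mΩ, add_comm]
    refine add_le_add ?_ ?_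
    · rw [setLIntegral_congr_fun (g := fun x => ‖g x‖ₑ ^ 2) mΩ.compl (fun x hx => by simp only [hout x hx])]
      exact lintegral_mono_set fun x hx => hoff x hx
    · calc ∫⁻ x in Ω, ‖h x‖ₑ ^ 2 ≤ ∫⁻ x in Ω, (2 * ENNReal.ofReal t) ^ 2 := by
            refine setLIntegral_mono' mΩ fun x hx => ?_
            obtain ⟨i, hi⟩ := mem_iUnion.1 hx
            rw [hin i x hi]
            gcongr
            exact avle2 i
        _ = _ := by rw [setLIntegral_const]; ring
  · -- measure of the bad set
    set B : Set ℝ := {x | t / 2 < ‖g x‖} with hB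
    have mB : MeasurableSet B := measurableSet_lt measurable_const hgc.norm.measurable
    have h1 : ∀ i, ENNReal.ofReal t * ENNReal.ofReal (r i) ≤ 2 * ∫⁻ x in Q i ∩ B, ‖g x‖ₑ := by
      intro i
      have h2 : ∫⁻ x in Q i, ‖g x‖ₑ ≤ (∫⁻ x in Q i ∩ B, ‖g x‖ₑ) + ENNReal.ofReal (t/2) * ENNReal.ofReal (r i) := by
        rw [← lintegral_inter_add_sdiff _ (Q i) mB]
        gcongr
        calc ∫⁻ x in Q i \ B, ‖g x‖ₑ ≤ ∫⁻ x in Q i \ B, ENNReal.ofReal (t/2) := by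
              refine setLIntegral_mono' ((mQ i).diff mB) fun x hx => ?_
              rw [← ofReal_norm]
              refine ENNReal.ofReal_le_ofReal ?_
              have := hx.2
              simpa [hB] using this
          _ ≤ _ := by
              rw [setLIntegral_const, ← vQ]
              gcongr
              exact sdiff_subset
      have h3 := (glo i).trans h2
      have h4 : ENNReal.ofReal t = ENNReal.ofReal (t/2) + ENNReal.ofReal (t/2) := by
        rw [← ENNReal.ofReal_add (by positivity) (by positivity)]; congr 1; ring
      have h5 : ENNReal.ofReal (t/2) * ENNReal.ofReal (r i) ≤ ∫⁻ x in Q i ∩ B, ‖g x‖ₑ := by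
        rw [h4, add_mul] at h3
        exact (ENNReal.add_le_add_iff_right (ENNReal.mul_ne_top ENNReal.ofReal_ne_top ENNReal.ofReal_ne_top)).1 h3
      rw [h4, add_mul, two_mul]
      exact add_le_add h5 h5
    rw [vΩ, ← ENNReal.tsum_mul_left]
    refine (ENNReal.tsum_le_tsum h1).trans ?_
    rw [ENNReal.tsum_mul_left, ← lintegral_iUnion (fun i => (mQ i).inter mB) (fun i j hij => (hdis hij).mono inter_subset_left inter_subset_left)]
    gcongr
    exact iUnion_subset fun i => inter_subset_right

lemma cz_weak {E : Type*} [NormedAddCommGroup E] [NormedSpace ℂ E] [CompleteSpace E]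
    (K : ℝ → ℝ → E →L[ℂ] ℂ) (hK : Continuous fun p : ℝ × ℝ => K p.1 p.2) (M : ℝ)
    (hM : ∀ x y, ‖K x y‖ ≤ M) (A : ℝ≥0∞)
    (hH : ∀ x c r, 0 < r → |x - c| ≤ r → ∀ v : E, ∫⁻ y in {y | 2 * r ≤ |y - c|}, ‖(K x y - K c y) v‖ₑ ≤ A * ‖v‖ₑ)
    (h2 : ∀ h : ℝ → E, Integrable h → ∫⁻ y, ‖∫ x, K x y (h x)‖ₑ ^ 2 ≤ A * ∫⁻ x, ‖h x‖ₑ ^ 2)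
    (g : ℝ → E) (hgc : Continuous g) (hgi : Integrable g) (t : ℝ) (ht : 0 < t) :
    volume {y | ENNReal.ofReal (2 * t) < ‖∫ x, K x y (g x)‖ₑ} ≤
      A * ((ENNReal.ofReal t ^ 2)⁻¹ * ∫⁻ x in {x | ‖g x‖ ≤ t}, ‖g x‖ₑ ^ 2) +
      (8 + 16 * A) * ((ENNReal.ofReal t)⁻¹ * ∫⁻ x in {x | t / 2 < ‖g x‖}, ‖g x‖ₑ) := by
  obtain ⟨S, c, r, h, hr, hdis, hinteg, hout, hmean, hb1, hh2, hvol⟩ := cz_good g hgc hgi t ht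
  set Q : S → Set ℝ := fun i => Ico (c i) (c i + r i) with hQ
  have mQ : ∀ i, MeasurableSet (Q i) := fun i => measurableSet_Ico
  have vQ : ∀ i, volume (Q i) = ENNReal.ofReal (r i) := fun i => by simp [hQ, Real.volume_Ico]
  set Ω : Set ℝ := ⋃ i, Q i with hΩ
  have mΩ : MeasurableSet Ω := MeasurableSet.iUnion mQ
  have vΩ : volume Ω = ∑' i, ENNReal.ofReal (r i) := by
    rw [hΩ, measure_iUnion hdis mQ]; simp_rw [vQ]
  set τ := ENNReal.ofReal t with hτ
  have τ0 : τ ≠ 0 := by simpa [hτ] using ht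
  have τt : τ ≠ ∞ := ENNReal.ofReal_ne_top
  set u : ℝ → E := fun x => g x - h x with hu
  have ui : Integrable u := hgi.sub hinteg
  set X : Set ℝ := ⋃ i, Ioo (c i - 2 * r i) (c i + 2 * r i) with hX
  have mX : MeasurableSet X := MeasurableSet.iUnion fun i => measurableSet_Ioo
  have vX : volume X ≤ 4 * volume Ω := by
    refine (measure_iUnion_le _).trans ?_
    rw [vΩ, ← ENNReal.tsum_mul_left]
    refine ENNReal.tsum_le_tsum fun i => ?_
    rw [Real.volume_Ioo, show c i + 2 * r i - (c i - 2 * r i) = 4 * r i by ring, ENNReal.ofReal_mul (by norm_num)]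
    simp
  have split : ∀ y, ∫ x, K x y (g x) = (∫ x, K x y (h x)) + ∫ x, K x y (u x) := by
    intro y
    rw [← integral_add (cz_app_int K hK M hM _ h hinteg y) (cz_app_int K hK M hM _ u ui y)]
    congr 1; ext x; simp [hu]
  have usum : ∀ y, ‖∫ x, K x y (u x)‖ₑ ≤ ∑' i, ‖∫ x in Q i, K x y (u x)‖ₑ := by
    intro y
    have e1 : ∫ x, K x y (u x) = ∫ x in Ω, K x y (u x) := by
      rw [setIntegral_eq_integral_of_forall_compl_eq_zero]
      intro x hx
      simp [hu, hout x hx]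
    rw [e1, hΩ, integral_iUnion mQ hdis (cz_app_int K hK M hM _ u ui y).integrableOn]
    exact enorm_tsum_le_tsum_enorm
  have bad : ∫⁻ y in Xᶜ, ‖∫ x, K x y (u x)‖ₑ ≤ A * (4 * τ * volume Ω) := by
    calc ∫⁻ y in Xᶜ, ‖∫ x, K x y (u x)‖ₑ ≤ ∫⁻ y in Xᶜ, ∑' i, ‖∫ x in Q i, K x y (u x)‖ₑ := lintegral_mono usum
      _ = ∑' i, ∫⁻ y in Xᶜ, ‖∫ x in Q i, K x y (u x)‖ₑ :=
        lintegral_tsum fun i => (cz_app_meas K hK _ _ u ui.1.restrict).enorm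
      _ ≤ ∑' i, A * ∫⁻ x in Q i, ‖u x‖ₑ := by
        refine ENNReal.tsum_le_tsum fun i => ?_
        refine le_trans (lintegral_mono_set ?_) (cz_atom K hK M hM A hH (c i) (r i) (hr i) u ui.integrableOn (hmean i))
        intro y hy
        simp only [hX, mem_compl_iff, mem_iUnion, not_exists, mem_Ioo, not_and, not_lt] at hy
        have hy := hy i
        simp only [Set.mem_ofPred_eq]
        by_contra! hc
        rw [abs_lt] at hc
        linarith [hy (by linarith)]
      _ = A * ∫⁻ x in Ω, ‖u x‖ₑ := by
        rw [ENNReal.tsum_mul_left, hΩ, lintegral_iUnion mQ hdis]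
      _ ≤ _ := by gcongr
  have sub : {y | ENNReal.ofReal (2 * t) < ‖∫ x, K x y (g x)‖ₑ} ⊆
      (X ∪ {y | τ ^ 2 ≤ ‖∫ x, K x y (h x)‖ₑ ^ 2}) ∪ (Xᶜ ∩ {y | τ ≤ ‖∫ x, K x y (u x)‖ₑ}) := by
    intro y hy
    by_contra hc
    simp only [mem_union, not_or, mem_inter_iff, mem_compl_iff, not_and, Set.mem_ofPred_eq, not_le] at hc hy
    obtain ⟨⟨c1, c2⟩, c3⟩ := hc
    have c3 := c3 c1
    have c2 := lt_of_pow_lt_pow_left' 2 c2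
    rw [split] at hy
    have : ENNReal.ofReal (2 * t) = τ + τ := by
      rw [hτ, ← ENNReal.ofReal_add ht.le ht.le]; congr 1; ring
    rw [this] at hy
    exact absurd (hy.trans_le (enorm_add_le _ _)) (not_lt.2 (add_le_add c2.le c3.le))
  have v2 : volume {y | τ ^ 2 ≤ ‖∫ x, K x y (h x)‖ₑ ^ 2} ≤ (τ ^ 2)⁻¹ * (A * ((∫⁻ x in {x | ‖g x‖ ≤ t}, ‖g x‖ₑ ^ 2) + 4 * τ ^ 2 * volume Ω)) := by
    have m1 := mul_meas_ge_le_lintegral₀ ((cz_app_meas K hK volume volume h hinteg.1).enorm.pow_const 2) (τ ^ 2)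
    rw [mul_comm, ← div_eq_mul_inv, ENNReal.le_div_iff_mul_le (by simp [τ0]) (by simp [τt]), mul_comm]
    refine m1.trans ((h2 h hinteg).trans ?_)
    gcongr
  have v3 : volume (Xᶜ ∩ {y | τ ≤ ‖∫ x, K x y (u x)‖ₑ}) ≤ 4 * A * volume Ω := by
    have m1 := mul_meas_ge_le_lintegral₀ (μ := volume.restrict Xᶜ) (cz_app_meas K hK volume _ u ui.1).enorm τ
    rw [Measure.restrict_apply' mX.compl, inter_comm] at m1
    have m2 := m1.trans bad
    rw [show A * (4 * τ * volume Ω) = τ * (4 * A * volume Ω) by ring] at m2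
    exact (ENNReal.mul_le_mul_iff_right τ0 τt).1 m2
  have v4 : volume Ω ≤ 2 * (τ⁻¹ * ∫⁻ x in {x | t / 2 < ‖g x‖}, ‖g x‖ₑ) := by
    rw [← ENNReal.mul_le_mul_iff_right τ0 τt]
    refine hvol.trans (le_of_eq ?_)
    rw [show ∀ z : ℝ≥0∞, τ * (2 * (τ⁻¹ * z)) = (τ * τ⁻¹) * (2 * z) by intro z; ring, ENNReal.mul_inv_cancel τ0 τt, one_mul]
  refine (measure_mono sub).trans ?_
  refine (measure_union_le _ _).trans ?_
  refine (add_le_add (measure_union_le _ _) v3).trans ?_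
  refine (add_le_add (add_le_add vX v2) le_rfl).trans ?_
  set W := volume Ω
  set Y := ∫⁻ x in {x | ‖g x‖ ≤ t}, ‖g x‖ₑ ^ 2
  set Z := τ⁻¹ * ∫⁻ x in {x | t / 2 < ‖g x‖}, ‖g x‖ₑ
  have e : (τ ^ 2)⁻¹ * (A * (Y + 4 * τ ^ 2 * W)) = A * ((τ ^ 2)⁻¹ * Y) + ((τ ^ 2) * (τ ^ 2)⁻¹) * (4 * A * W) := by ring
  rw [e, ENNReal.mul_inv_cancel (by simp [τ0]) (by simp [τt]), one_mul]
  calc 4 * W + (A * ((τ ^ 2)⁻¹ * Y) + 4 * A * W) + 4 * A * W = A * ((τ ^ 2)⁻¹ * Y) + (4 + 8 * A) * W := by ring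
    _ ≤ A * ((τ ^ 2)⁻¹ * Y) + (4 + 8 * A) * (2 * Z) := by gcongr
    _ = _ := by ring

lemma marc1 (r : ℝ) (hr2 : r < 2) (G : ℝ) (hG : 0 ≤ G) :
    ENNReal.ofReal G ^ 2 * ∫⁻ t in Ioi (0:ℝ), (Ici G).indicator (fun t => ENNReal.ofReal (t ^ (r - 3))) t
      ≤ ENNReal.ofReal (1 / (2 - r)) * ENNReal.ofReal (G ^ r) := by
  rcases hG.eq_or_lt with h | h
  · subst h; simp
  · have h1 : ∫⁻ t in Ioi (0:ℝ), (Ici G).indicator (fun t => ENNReal.ofReal (t ^ (r - 3))) t = ENNReal.ofReal (G ^ (r-2) / (2 - r)) := by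
      rw [lintegral_indicator measurableSet_Ici, Measure.restrict_restrict measurableSet_Ici]
      rw [show Ici G ∩ Ioi 0 = Ici G from inter_eq_left.2 fun x hx => h.trans_le hx, setLIntegral_congr Ioi_ae_eq_Ici.symm]
      rw [← ofReal_integral_eq_lintegral_ofReal (integrableOn_Ioi_rpow_of_lt (by linarith) h)]
      · rw [integral_Ioi_rpow_of_lt (by linarith) h]
        congr 1
        rw [show r - 3 + 1 = -(2 - r) by ring, show r - 2 = -(2 - r) by ring, neg_div_neg_eq]
      · filter_upwards [ae_restrict_mem measurableSet_Ioi] with x hx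
        have : 0 < x := h.trans hx
        simp only [Pi.zero_apply]; positivity
    rw [h1, ← ENNReal.ofReal_pow hG, ← ENNReal.ofReal_mul (by positivity), ← ENNReal.ofReal_mul (by apply one_div_nonneg.2; linarith)]
    refine ENNReal.ofReal_le_ofReal (le_of_eq ?_)
    rw [mul_div_assoc', ← Real.rpow_natCast, ← Real.rpow_add h]
    rw [show ((2:ℕ):ℝ) + (r - 2) = r by push_cast; ring]; ring

lemma marc2 (r : ℝ) (hr1 : 1 < r) (hr2 : r < 2) (G : ℝ) (hG : 0 ≤ G) :
    ENNReal.ofReal G * ∫⁻ t in Ioi (0:ℝ), (Iio (2 * G)).indicator (fun t => ENNReal.ofReal (t ^ (r - 2))) t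
      ≤ ENNReal.ofReal (2 ^ (r - 1) / (r - 1)) * ENNReal.ofReal (G ^ r) := by
  have h1 : ∫⁻ t in Ioi (0:ℝ), (Iio (2 * G)).indicator (fun t => ENNReal.ofReal (t ^ (r - 2))) t = ENNReal.ofReal ((2 * G) ^ (r-1) / (r - 1)) := by
    rw [lintegral_indicator measurableSet_Iio, Measure.restrict_restrict measurableSet_Iio]
    rw [inter_comm, Ioi_inter_Iio, setLIntegral_congr Ioo_ae_eq_Ioc]
    have hi := (intervalIntegral.intervalIntegrable_rpow' (a := 0) (b := 2 * G) (r := r - 2) (by linarith))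
    rw [intervalIntegrable_iff_integrableOn_Ioc_of_le (by positivity)] at hi
    rw [← ofReal_integral_eq_lintegral_ofReal hi]
    · rw [← intervalIntegral.integral_of_le (by positivity), integral_rpow (Or.inl (by linarith))]
      congr 1
      rw [show r - 2 + 1 = r - 1 by ring, Real.zero_rpow (by linarith), sub_zero]
    · filter_upwards [ae_restrict_mem measurableSet_Ioc] with x hx
      have : 0 < x := hx.1
      simp only [Pi.zero_apply]; positivity
  have hr : 0 < r - 1 := by linarith
  rw [h1, ← ENNReal.ofReal_mul (by positivity), ← ENNReal.ofReal_mul (by positivity)]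
  refine ENNReal.ofReal_le_ofReal (le_of_eq ?_)
  have : G ^ r = G * G ^ (r - 1) := by
    rcases hG.eq_or_lt with h | h
    · subst h; rw [Real.zero_rpow (by linarith)]; simp
    · nth_rw 2 [← Real.rpow_one G]; rw [← Real.rpow_add h]; congr 1; ring
  rw [this, Real.mul_rpow (by norm_num) hG]; ring

noncomputable def czC (A : ℝ≥0∞) (r : ℝ) : ℝ≥0∞ :=
  ENNReal.ofReal (2 ^ r) * (ENNReal.ofReal r * (A * ENNReal.ofReal (1 / (2 - r)) + (8 + 16 * A) * ENNReal.ofReal (2 ^ (r - 1) / (r - 1))))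

lemma czC_ne_top (A : ℝ≥0∞) (hA : A ≠ ∞) (r : ℝ) : czC A r ≠ ∞ := by
  unfold czC
  finiteness

lemma enr_rpow {F : Type*} [NormedAddCommGroup F] (z : F) (r : ℝ) (hr : 0 ≤ r) : ‖z‖ₑ ^ r = ENNReal.ofReal (‖z‖ ^ r) := by
  rw [← ofReal_norm, ENNReal.ofReal_rpow_of_nonneg (norm_nonneg _) hr]

lemma cz_marc {E : Type*} [NormedAddCommGroup E] [NormedSpace ℂ E] [CompleteSpace E]
    (K : ℝ → ℝ → E →L[ℂ] ℂ) (hK : Continuous fun p : ℝ × ℝ => K p.1 p.2) (M : ℝ)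
    (hM : ∀ x y, ‖K x y‖ ≤ M) (A : ℝ≥0∞)
    (hH : ∀ x c r, 0 < r → |x - c| ≤ r → ∀ v : E, ∫⁻ y in {y | 2 * r ≤ |y - c|}, ‖(K x y - K c y) v‖ₑ ≤ A * ‖v‖ₑ)
    (h2 : ∀ h : ℝ → E, Integrable h → ∫⁻ y, ‖∫ x, K x y (h x)‖ₑ ^ 2 ≤ A * ∫⁻ x, ‖h x‖ₑ ^ 2)
    (g : ℝ → E) (hgc : Continuous g) (hgi : Integrable g) (r : ℝ) (hr1 : 1 < r) (hr2 : r < 2) :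
    ∫⁻ y, ‖∫ x, K x y (g x)‖ₑ ^ r ≤ czC A r * ∫⁻ x, ‖g x‖ₑ ^ r := by
  set f : ℝ → ℝ := fun y => ‖∫ x, K x y (g x)‖ / 2 with hf
  have fm : AEMeasurable f := ((cz_app_meas K hK volume volume g hgi.1).norm.aemeasurable).div_const 2
  have lc := lintegral_rpow_eq_lintegral_meas_lt_mul (μ := volume) (f := f) (Filter.Eventually.of_forall fun y => by simp only [hf, Pi.zero_apply]; positivity) fm (p := r) (by linarith)
  have e1 : ∫⁻ y, ‖∫ x, K x y (g x)‖ₑ ^ r = ENNReal.ofReal (2 ^ r) * ∫⁻ y, ENNReal.ofReal (f y ^ r) := by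
    rw [← lintegral_const_mul' _ _ ENNReal.ofReal_ne_top]
    refine lintegral_congr fun y => ?_
    rw [enr_rpow _ _ (by linarith), ← ENNReal.ofReal_mul (by positivity), ← Real.mul_rpow (by norm_num) (by simp only [hf]; positivity)]
    simp only [hf]; congr 2; ring
  rw [e1, lc]
  unfold czC
  rw [mul_assoc, mul_assoc]
  gcongr
  -- weak estimate
  have w : ∀ t ∈ Ioi (0:ℝ), volume {a | t < f a} * ENNReal.ofReal (t ^ (r - 1)) ≤
      A * (∫⁻ x, ENNReal.ofReal ‖g x‖ ^ 2 * (Ici ‖g x‖).indicator (fun t => ENNReal.ofReal (t ^ (r - 3))) t) +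
      (8 + 16 * A) * (∫⁻ x, ENNReal.ofReal ‖g x‖ * (Iio (2 * ‖g x‖)).indicator (fun t => ENNReal.ofReal (t ^ (r - 2))) t) := by
    intro t ht
    have ht : 0 < t := ht
    have s : {a | t < f a} ⊆ {y | ENNReal.ofReal (2 * t) < ‖∫ x, K x y (g x)‖ₑ} := by
      intro y hy
      simp only [Set.mem_ofPred_eq, hf] at hy ⊢
      rw [← ofReal_norm, ENNReal.ofReal_lt_ofReal_iff_of_nonneg (by positivity)]
      linarith
    refine (mul_le_mul_left ((measure_mono s).trans (cz_weak K hK M hM A hH h2 g hgc hgi t ht)) _).trans (le_of_eq ?_)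
    have i1 : ∫⁻ x, ENNReal.ofReal ‖g x‖ ^ 2 * (Ici ‖g x‖).indicator (fun t => ENNReal.ofReal (t ^ (r - 3))) t
        = ENNReal.ofReal (t ^ (r - 3)) * ∫⁻ x in {x | ‖g x‖ ≤ t}, ‖g x‖ₑ ^ 2 := by
      rw [← lintegral_const_mul' _ _ ENNReal.ofReal_ne_top, ← lintegral_indicator (measurableSet_le hgc.norm.measurable measurable_const)]
      refine lintegral_congr fun x => ?_
      by_cases h : ‖g x‖ ≤ t
      · simp [indicator, h, mul_comm]
      · simp [indicator, h]
    have i2 : ∫⁻ x, ENNReal.ofReal ‖g x‖ * (Iio (2 * ‖g x‖)).indicator (fun t => ENNReal.ofReal (t ^ (r - 2))) t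
        = ENNReal.ofReal (t ^ (r - 2)) * ∫⁻ x in {x | t / 2 < ‖g x‖}, ‖g x‖ₑ := by
      rw [← lintegral_const_mul' _ _ ENNReal.ofReal_ne_top, ← lintegral_indicator (measurableSet_lt measurable_const hgc.norm.measurable)]
      refine lintegral_congr fun x => ?_
      by_cases h : t / 2 < ‖g x‖
      · have h' : t < 2 * ‖g x‖ := by linarith
        simp only [indicator, mem_Iio, h', if_true, Set.mem_ofPred_eq, h, ofReal_norm]; exact mul_comm _ _
      · have h' : ¬ t < 2 * ‖g x‖ := by intro h'; apply h; linarith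
        simp [indicator, h, h']
    have p1 : ENNReal.ofReal (t ^ (r - 3)) = (ENNReal.ofReal t ^ 2)⁻¹ * ENNReal.ofReal (t ^ (r - 1)) := by
      rw [← ENNReal.ofReal_pow ht.le, ← ENNReal.ofReal_inv_of_pos (by positivity), ← ENNReal.ofReal_mul (by positivity)]
      congr 1
      rw [show r - 3 = r - 1 - (2:ℕ) by push_cast; ring, Real.rpow_sub_natCast ht.ne']
      field_simp
    have p2 : ENNReal.ofReal (t ^ (r - 2)) = (ENNReal.ofReal t)⁻¹ * ENNReal.ofReal (t ^ (r - 1)) := by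
      rw [← ENNReal.ofReal_inv_of_pos (by positivity), ← ENNReal.ofReal_mul (by positivity)]
      congr 1
      rw [show r - 2 = r - 1 - 1 by ring, Real.rpow_sub_one ht.ne']
      field_simp
    rw [i1, i2, p1, p2]; ring
  have ng : Continuous fun p : ℝ × ℝ => ‖g p.2‖ := by fun_prop
  have m1 : Measurable (fun p : ℝ × ℝ => ENNReal.ofReal ‖g p.2‖ ^ 2 * (Ici ‖g p.2‖).indicator (fun t => ENNReal.ofReal (t ^ (r - 3))) p.1) := by
    refine (ng.measurable.ennreal_ofReal.pow_const 2).mul ?_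
    have : (fun p : ℝ × ℝ => (Ici ‖g p.2‖).indicator (fun t => ENNReal.ofReal (t ^ (r - 3))) p.1) =
      {p : ℝ × ℝ | ‖g p.2‖ ≤ p.1}.indicator (fun p => ENNReal.ofReal (p.1 ^ (r - 3))) := by
      ext p; simp [indicator]
    rw [this]
    exact (measurable_fst.pow_const _).ennreal_ofReal.indicator (measurableSet_le ng.measurable measurable_fst)
  have m2 : Measurable (fun p : ℝ × ℝ => ENNReal.ofReal ‖g p.2‖ * (Iio (2 * ‖g p.2‖)).indicator (fun t => ENNReal.ofReal (t ^ (r - 2))) p.1) := by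
    refine (ng.measurable.ennreal_ofReal).mul ?_
    have : (fun p : ℝ × ℝ => (Iio (2 * ‖g p.2‖)).indicator (fun t => ENNReal.ofReal (t ^ (r - 2))) p.1) =
      {p : ℝ × ℝ | p.1 < 2 * ‖g p.2‖}.indicator (fun p => ENNReal.ofReal (p.1 ^ (r - 2))) := by
      ext p; simp [indicator]
    rw [this]
    exact (measurable_fst.pow_const _).ennreal_ofReal.indicator (measurableSet_lt measurable_fst (ng.measurable.const_mul 2))
  refine (setLIntegral_mono' measurableSet_Ioi w).trans ?_
  have s1 := lintegral_lintegral_swap (μ := volume.restrict (Ioi (0:ℝ))) (ν := (volume : Measure ℝ)) (f := fun t x => ENNReal.ofReal ‖g x‖ ^ 2 * (Ici ‖g x‖).indicator (fun t => ENNReal.ofReal (t ^ (r - 3))) t) m1.aemeasurable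
  have s2 := lintegral_lintegral_swap (μ := volume.restrict (Ioi (0:ℝ))) (ν := (volume : Measure ℝ)) (f := fun t x => ENNReal.ofReal ‖g x‖ * (Iio (2 * ‖g x‖)).indicator (fun t => ENNReal.ofReal (t ^ (r - 2))) t) m2.aemeasurable
  rw [lintegral_add_left (m1.lintegral_prod_right'.const_mul A), lintegral_const_mul _ m1.lintegral_prod_right', lintegral_const_mul _ m2.lintegral_prod_right',
    s1, s2, add_mul (A * _), mul_assoc A, mul_assoc (8 + 16 * A)]
  have mi : ∀ s : Set ℝ, MeasurableSet s → ∀ e : ℝ, Measurable (s.indicator (fun t => ENNReal.ofReal (t ^ e))) := fun s hs e =>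
    (measurable_id.pow_const e).ennreal_ofReal.indicator hs
  gcongr
  · rw [← lintegral_const_mul' _ _ ENNReal.ofReal_ne_top]
    refine lintegral_mono fun x => ?_
    dsimp only
    rw [lintegral_const_mul _ (mi _ measurableSet_Ici _), enr_rpow _ _ (by linarith)]
    exact marc1 r hr2 _ (norm_nonneg _)
  · rw [← lintegral_const_mul' _ _ ENNReal.ofReal_ne_top]
    refine lintegral_mono fun x => ?_
    dsimp only
    rw [lintegral_const_mul _ (mi _ measurableSet_Iio _), enr_rpow _ _ (by linarith)]
    exact marc2 r hr1 hr2 _ (norm_nonneg _)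

lemma KK_continuous {N : ℕ} (φ : SchwartzMap ℝ ℂ) (a b : Fin N → ℝ) : Continuous fun p : ℝ × ℝ => KK φ a b p.1 p.2 := by
  unfold KK
  exact continuous_finsetSum _ fun m _ => (kk_continuous2 φ (a m) (b m)).smul continuous_const

lemma KK_bdd {N : ℕ} (φ : SchwartzMap ℝ ℂ) (a b : Fin N → ℝ) : ∃ M, ∀ x y, ‖KK φ a b x y‖ ≤ M := by
  choose M hM using fun m => kk_bdd φ (a m) (b m)
  refine ⟨∑ m, M m * ‖(EuclideanSpace.proj m : EuclideanSpace ℂ (Fin N) →L[ℂ] ℂ)‖, fun x y => ?_⟩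
  unfold KK
  refine (norm_sum_le _ _).trans (Finset.sum_le_sum fun m _ => ?_)
  rw [norm_smul]
  gcongr
  exact hM m x y

theorem KK_Lr (φ : SchwartzMap ℝ ℂ) (hφ : Function.support (𝓕 ⇑φ) ⊆ Icc 0 1) (r : ℝ) (hr1 : 1 < r) (hr2 : r ≤ 2) :
    ∃ C : ℝ≥0∞, C ≠ ∞ ∧ ∀ (N : ℕ) (a b : Fin N → ℝ), (∀ m, a m < b m) →
      (∀ m m', m ≠ m' → Disjoint (Icc (a m) (b m)) (Icc (a m') (b m'))) →
      ∀ g : ℝ → EuclideanSpace ℂ (Fin N), Continuous g → Integrable g →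
      ∫⁻ y, ‖∫ x, KK φ a b x y (g x)‖ₑ ^ r ≤ C * ∫⁻ x, ‖g x‖ₑ ^ r := by
  have fin : (∫⁻ t, ‖φ t‖ₑ) ^ 2 ≠ ∞ := ENNReal.pow_ne_top (hasFiniteIntegral_iff_enorm.1 φ.integrable.2).ne
  rcases hr2.eq_or_lt with h | h
  · subst h
    refine ⟨(∫⁻ t, ‖φ t‖ₑ) ^ 2, fin, fun N a b hab hd g _ hg => ?_⟩
    have := KK_L2 φ hφ a b hab hd g hg
    simpa using this
  · obtain ⟨A, hA, hH⟩ := hormander φ hφ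
    refine ⟨czC (max A ((∫⁻ t, ‖φ t‖ₑ) ^ 2)) r, czC_ne_top _ (by simp [hA, fin]) r, fun N a b hab hd g hgc hg => ?_⟩
    obtain ⟨M, hM⟩ := KK_bdd φ a b
    refine cz_marc (KK φ a b) (KK_continuous φ a b) M hM _ ?_ ?_ g hgc hg r hr1 h
    · intro x c ρ hρ hx v
      have := hH N a b hab hd x c ρ hρ hx v
      simp_rw [sub_mul, Finset.sum_sub_distrib] at this
      simp only [sub_apply, KK_apply]
      refine this.trans ?_
      gcongr
      exact le_max_left _ _
    · intro h hh
      refine (KK_L2 φ hφ a b hab hd h hh).trans ?_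
      gcongr
      exact le_max_right _ _

lemma kk_int_props' (φ : SchwartzMap ℝ ℂ) (a b : ℝ) (hab : a < b) (F : ℝ → ℂ) (hF : Integrable F) :
    Continuous (fun x => ∫ y, kk φ a b x y * F y) ∧ Integrable (fun x => ∫ y, kk φ a b x y * F y) ∧
    ∃ M, ∀ x, ‖∫ y, kk φ a b x y * F y‖ ≤ M := by
  obtain ⟨M, hM⟩ := kk_bdd φ a b
  have kc := kk_continuous2 φ a b
  refine ⟨?_, ?_, ∫ x, M * ‖F x‖, ?_⟩
  · refine continuous_of_dominated (bound := fun x => M * ‖F x‖) ?_ ?_ (hF.norm.const_mul M) ?_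
    · intro x
      exact (kc.comp (by fun_prop : Continuous fun y : ℝ => (x, y))).aestronglyMeasurable.mul hF.1
    · intro y
      refine Filter.Eventually.of_forall fun x => ?_
      rw [norm_mul]; gcongr; exact hM _ _
    · refine Filter.Eventually.of_forall fun y => ?_
      exact (kc.comp (by fun_prop : Continuous fun x : ℝ => (x, y))).mul continuous_const
  · have lp : 0 < b - a := sub_pos.2 hab
    have i1 : Integrable (fun t : ℝ => ((b - a : ℝ) : ℂ) * φ ((b - a) * t)) :=
      ((φ.integrable (μ := volume)).comp_mul_left' lp.ne').const_mul _
    have i2 : Integrable (fun y : ℝ => e2pi (-(a * y)) * F y) :=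
      hF.bdd_mul (c := 1) (continuous_e2pi.comp (by fun_prop)).aestronglyMeasurable (Filter.Eventually.of_forall fun y => by rw [norm_e2pi])
    have := i2.convolution_integrand (ContinuousLinearMap.mul ℂ ℂ) i1
    have := this.integral_prod_left
    refine this.congr (Filter.Eventually.of_forall fun x => ?_)
    simp only [ContinuousLinearMap.mul_apply', kk, wp]
    congr 1; ext y; ring
  · intro y
    refine norm_integral_le_of_norm_le (hF.norm.const_mul M) (Filter.Eventually.of_forall fun x => ?_)
    rw [norm_mul]; gcongr; exact hM _ _

noncomputable def Sf {N : ℕ} (φ : ℝ → ℂ) (a b : Fin N → ℝ) (F : ℝ → ℂ) (x : ℝ) : EuclideanSpace ℂ (Fin N) :=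
  WithLp.toLp 2 fun m => ∫ y, kk φ (a m) (b m) x y * F y

lemma cancel_aux (p : ℝ) (hp : 1 < p) (I C J : ℝ≥0∞) (hI : I ≠ ∞) (h : I ≤ (C * I) ^ (1 / (p / (p - 1))) * J) :
    I ^ (1 / p) ≤ C ^ (1 / (p / (p - 1))) * J := by
  have hp1 : 0 < p - 1 := by linarith
  rcases eq_or_ne I 0 with h0 | h0
  · subst h0; rw [ENNReal.zero_rpow_of_pos (by positivity)]; exact zero_le
  rw [ENNReal.mul_rpow_of_nonneg _ _ (by positivity)] at h
  set β := 1 / (p / (p - 1)) with hβ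
  have e : I = I ^ β * I ^ (1 / p) := by
    rw [← ENNReal.rpow_add _ _ h0 hI]
    nth_rw 1 [← ENNReal.rpow_one I]
    congr 1
    rw [hβ]; field_simp; ring
  have b0 : I ^ β ≠ 0 := by simp [h0, hI]
  have bt : I ^ β ≠ ∞ := ENNReal.rpow_ne_top_of_nonneg (by positivity) hI
  rw [← ENNReal.mul_le_mul_iff_right b0 bt, ← e]
  refine h.trans (le_of_eq ?_)
  ring

theorem Sf_Lp (φ : SchwartzMap ℝ ℂ) (hφ : Function.support (𝓕 ⇑φ) ⊆ Icc 0 1) (p : ℝ) (hp : 2 ≤ p) :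
    ∃ C : ℝ≥0∞, C ≠ ∞ ∧ ∀ (N : ℕ) (a b : Fin N → ℝ), (∀ m, a m < b m) →
      (∀ m m', m ≠ m' → Disjoint (Icc (a m) (b m)) (Icc (a m') (b m'))) →
      ∀ F : ℝ → ℂ, Integrable F → (∃ M, ∀ x, ‖F x‖ ≤ M) →
      (∫⁻ x, ‖Sf φ a b F x‖ₑ ^ p) ^ (1 / p) ≤ C * (∫⁻ x, ‖F x‖ₑ ^ p) ^ (1 / p) := by
  have hp1 : 0 < p - 1 := by linarith
  have hr1 : 1 < p / (p - 1) := by rw [lt_div_iff₀ hp1]; linarith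
  have hr2 : p / (p - 1) ≤ 2 := by rw [div_le_iff₀ hp1]; linarith
  obtain ⟨C, hC, hT⟩ := KK_Lr φ hφ _ hr1 hr2
  refine ⟨C ^ (1 / (p / (p - 1))), ENNReal.rpow_ne_top_of_nonneg (by positivity) hC, fun N a b hab hd F hF ⟨MF, hMF⟩ => ?_⟩
  choose sc si sM sb using fun m => kk_int_props' φ (a m) (b m) (hab m) F hF
  set s : Fin N → ℝ → ℂ := fun m x => ∫ y, kk φ (a m) (b m) x y * F y with hs
  have Sfa : ∀ x m, Sf φ a b F x m = s m x := fun x m => rfl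
  have Sc : Continuous (Sf φ a b F) := (PiLp.continuous_toLp 2 _).comp (continuous_pi sc)
  set H : ℝ → ℝ := fun x => ‖Sf φ a b F x‖ with hH
  have H0 : ∀ x, 0 ≤ H x := fun x => norm_nonneg _
  have Hc : Continuous H := Sc.norm
  have Hsq : ∀ x, H x ^ 2 = ∑ m, ‖s m x‖ ^ 2 := fun x => EuclideanSpace.norm_sq_eq _
  have Hb : ∃ M, ∀ x, H x ≤ M := by
    refine ⟨√(∑ m, sM m ^ 2), fun x => ?_⟩
    apply Real.le_sqrt_of_sq_le
    rw [Hsq]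
    exact Finset.sum_le_sum fun m _ => pow_le_pow_left₀ (norm_nonneg _) (sb m x) 2
  obtain ⟨MH, hMH⟩ := Hb
  set w : ℝ → ℝ := fun x => H x ^ (p - 2) with hw
  have wc : Continuous w := Hc.rpow_const fun x => Or.inr (by linarith)
  have wb : ∀ x, ‖w x‖ ≤ MH ^ (p - 2) := fun x => by
    rw [Real.norm_of_nonneg (Real.rpow_nonneg (H0 x) _)]
    exact Real.rpow_le_rpow (H0 x) (hMH x) (by linarith)
  set g : ℝ → EuclideanSpace ℂ (Fin N) := fun x => WithLp.toLp 2 fun m => (w x : ℂ) * (starRingEnd ℂ) (s m x) with hg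
  have gc : Continuous g := (PiLp.continuous_toLp 2 _).comp (continuous_pi fun m =>
    (Complex.continuous_ofReal.comp wc).mul (Complex.continuous_conj.comp (sc m)))
  have gmi : ∀ m, Integrable fun x => g x m := fun m =>
    Integrable.bdd_mul (c := MH ^ (p - 2)) ((LinearIsometryEquiv.integrable_comp_iff Complex.conjLIE).2 (si m))
      (Complex.continuous_ofReal.comp wc).aestronglyMeasurable (Filter.Eventually.of_forall fun x => by
        simpa using wb x)
  have gi : Integrable g := by
    have h1 : Integrable (fun x => ∑ m, ‖g x m‖) := integrable_finsetSum _ fun m _ => (gmi m).norm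
    refine h1.mono' gc.aestronglyMeasurable (Filter.Eventually.of_forall fun x => ?_)
    rw [EuclideanSpace.norm_eq]
    apply Real.sqrt_le_iff.2
    refine ⟨Finset.sum_nonneg fun _ _ => norm_nonneg _, Finset.sum_sq_le_sq_sum_of_nonneg fun _ _ => norm_nonneg _⟩
  have gn : ∀ x, ‖g x‖ = H x ^ (p - 1) := by
    intro x
    have h1 : ‖g x‖ ^ 2 = (w x * H x) ^ 2 := by
      rw [EuclideanSpace.norm_sq_eq, mul_pow, Hsq, Finset.mul_sum]
      refine Finset.sum_congr rfl fun m _ => ?_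
      simp [hg, mul_pow]
    rw [pow_left_inj₀ (norm_nonneg _) (mul_nonneg (Real.rpow_nonneg (H0 x) _) (H0 x)) (by norm_num)] at h1
    rw [h1]
    rcases (H0 x).eq_or_lt with h | h
    · simp only [← h, mul_zero]; rw [Real.zero_rpow (by linarith)]
    · nth_rw 2 [← Real.rpow_one (H x)]; rw [← Real.rpow_add h]; congr 1; ring
  have pt : ∀ x, ∑ m, g x m * s m x = ((H x ^ p : ℝ) : ℂ) := by
    intro x
    have h1 : H x ^ p = w x * H x ^ 2 := by
      rw [hw]
      rcases (H0 x).eq_or_lt with h | h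
      · simp only [← h]; rw [Real.zero_rpow (by linarith)]; simp
      · simp only; rw [← Real.rpow_natCast, ← Real.rpow_add h]; congr 1; push_cast; ring
    rw [h1, Hsq]
    push_cast
    rw [Finset.mul_sum]
    refine Finset.sum_congr rfl fun m _ => ?_
    simp only [hg, mul_assoc]
    rw [Complex.conj_mul']
  have gsi : ∀ m, Integrable fun x => g x m * s m x := fun m =>
    (gmi m).mul_bdd (c := sM m) (sc m).aestronglyMeasurable (Filter.Eventually.of_forall (sb m))
  have Hpi : Integrable (fun x => ((H x ^ p : ℝ) : ℂ)) := by
    refine (integrable_finsetSum Finset.univ fun m _ => gsi m).congr (Filter.Eventually.of_forall pt)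
  have Ie : ∫⁻ x, ‖Sf φ a b F x‖ₑ ^ p = ∫⁻ x, ‖((H x ^ p : ℝ) : ℂ)‖ₑ := by
    refine lintegral_congr fun x => ?_
    rw [enr_rpow _ _ (by linarith), ← ofReal_norm, Complex.norm_real, Real.norm_of_nonneg (Real.rpow_nonneg (H0 x) _)]
  have Ifin : ∫⁻ x, ‖Sf φ a b F x‖ₑ ^ p ≠ ∞ := by
    rw [Ie]; exact (hasFiniteIntegral_iff_enorm.1 Hpi.2).ne
  have Ie2 : ∫⁻ x, ‖Sf φ a b F x‖ₑ ^ p = ‖∫ x, ((H x ^ p : ℝ) : ℂ)‖ₑ := by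
    rw [integral_complex_ofReal, ← ofReal_norm, Complex.norm_real, Real.norm_of_nonneg (integral_nonneg fun x => Real.rpow_nonneg (H0 x) _),
      ofReal_integral_eq_lintegral_ofReal (f := fun x => H x ^ p) (by simpa using Hpi.re) (Filter.Eventually.of_forall fun x => Real.rpow_nonneg (H0 x) _)]
    refine lintegral_congr fun x => ?_
    rw [enr_rpow _ _ (by linarith)]
  have dual : ∫ x, ((H x ^ p : ℝ) : ℂ) = ∫ y, (∫ x, KK φ a b x y (g x)) * F y := by
    simp_rw [← pt, KK_integral φ a b g gi, Finset.sum_mul]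
    rw [integral_finsetSum _ fun m _ => gsi m, integral_finsetSum]
    · refine Finset.sum_congr rfl fun m _ => ?_
      rw [kk_fub φ (a m) (b m) (hab m) _ F (gmi m) hF.1 MF hMF]
    · intro m _
      obtain ⟨c1, i1, M1, b1⟩ := kk_int_props φ (a m) (b m) (hab m) _ (gmi m)
      exact i1.mul_bdd (c := MF) hF.1 (Filter.Eventually.of_forall hMF)
  have Tm : AEMeasurable (fun y => ‖∫ x, KK φ a b x y (g x)‖ₑ) :=
    (cz_app_meas _ (KK_continuous φ a b) volume volume g gi.1).enorm
  have hc : Real.HolderConjugate (p / (p - 1)) p := (Real.HolderConjugate.conjExponent (by linarith : 1 < p)).symm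
  have gI : ∫⁻ x, ‖g x‖ₑ ^ (p / (p - 1)) = ∫⁻ x, ‖Sf φ a b F x‖ₑ ^ p := by
    refine lintegral_congr fun x => ?_
    rw [enr_rpow _ _ (by positivity), enr_rpow _ _ (by linarith), gn, ← Real.rpow_mul (H0 x)]
    congr 2; field_simp
  refine cancel_aux p (by linarith) _ _ _ Ifin ?_
  calc ∫⁻ x, ‖Sf φ a b F x‖ₑ ^ p ≤ ∫⁻ y, ((fun y => ‖∫ x, KK φ a b x y (g x)‖ₑ) * (fun y => ‖F y‖ₑ)) y := by
        rw [Ie2, dual]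
        refine (enorm_integral_le_lintegral_enorm _).trans (le_of_eq ?_)
        simp only [enorm_mul, Pi.mul_apply]
    _ ≤ (∫⁻ y, ‖∫ x, KK φ a b x y (g x)‖ₑ ^ (p / (p - 1))) ^ (1 / (p / (p - 1))) * (∫⁻ y, ‖F y‖ₑ ^ p) ^ (1 / p) :=
        ENNReal.lintegral_mul_le_Lp_mul_Lq _ hc Tm hF.1.enorm
    _ ≤ _ := by
        gcongr
        rw [← gI]
        exact hT N a b hab hd g gc gi

lemma conv_props (f g : ℝ → ℂ) (hf : Integrable f) (hg : Integrable g) (hgc : Continuous g) (M : ℝ) (hM : ∀ x, ‖g x‖ ≤ M) :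
    Integrable (conv f g) ∧ ∃ M', ∀ x, ‖conv f g x‖ ≤ M' := by
  refine ⟨?_, ∫ x, ‖f x‖ * M, fun x => ?_⟩
  · exact hf.integrable_convolution (ContinuousLinearMap.mul ℂ ℂ) hg
  · refine norm_integral_le_of_norm_le (hf.norm.mul_const M) (Filter.Eventually.of_forall fun t => ?_)
    rw [norm_mul]; gcongr; exact hM _

lemma conv_swap (f g h : ℝ → ℂ) (hf : Integrable f) (hg : Integrable g) (hgc : Continuous g) (Mg : ℝ) (hMg : ∀ x, ‖g x‖ ≤ Mg)
    (hh : Integrable h) (hhc : Continuous h) (Mh : ℝ) (hMh : ∀ x, ‖h x‖ ≤ Mh) (x : ℝ) :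
    conv (conv f g) h x = conv (conv f h) g x := by
  have key : ∀ g h : ℝ → ℂ, Integrable g → Continuous h → (∀ x, ‖h x‖ ≤ Mh ∨ ‖h x‖ ≤ Mg) → 
      conv (conv f g) h x = ∫ s, f s * ∫ t, g t * h (x - s - t) := by
    intro g h hg hhc hb
    have i0 := hf.convolution_integrand (ContinuousLinearMap.mul ℂ ℂ) hg
    have i1 : Integrable (fun p : ℝ × ℝ => f p.2 * g (p.1 - p.2) * h (x - p.1)) (volume.prod volume) :=
      i0.mul_bdd (c := max Mh Mg) (hhc.comp (by fun_prop : Continuous fun p : ℝ × ℝ => x - p.1)).aestronglyMeasurable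
        (Filter.Eventually.of_forall fun p => le_max_iff.2 (hb _))
    have := integral_integral_swap (f := fun t s => f s * g (t - s) * h (x - t)) i1
    unfold conv
    simp_rw [← integral_mul_const, this]
    congr 1; ext s
    rw [← integral_const_mul, ← integral_sub_right_eq_self (fun t => f s * (g t * h (x - s - t))) s]
    congr 1; ext t
    rw [show x - s - (t - s) = x - t by ring]; ring
  rw [key g h hg hhc fun x => Or.inl (hMh x), key h g hh hgc fun x => Or.inr (hMg x)]
  congr 1; ext s; congr 1
  rw [← integral_sub_left_eq_self _ _ (x - s)]
  congr 1; ext t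
  rw [show x - s - (x - s - t) = t by ring]; ring

lemma phim_props (φ : SchwartzMap ℝ ℂ) (a b : ℝ) (hab : a < b) :
    Integrable (phim φ a b) ∧ Continuous (phim φ a b) ∧ ∃ M, ∀ x, ‖phim φ a b x‖ ≤ M := by
  have lp : 0 < b - a := sub_pos.2 hab
  have hc : Continuous (phim φ a b) := by
    unfold phim
    have := continuous_e2pi
    have := φ.continuous
    fun_prop
  have i1 : Integrable (fun t : ℝ => ((b - a : ℝ) : ℂ) * φ ((b - a) * t)) :=
      ((φ.integrable (μ := volume)).comp_mul_left' lp.ne').const_mul _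
  refine ⟨i1.norm.mono' hc.aestronglyMeasurable (Filter.Eventually.of_forall fun x => ?_), hc, |b - a| * (SchwartzMap.seminorm ℝ 0 0) φ, fun x => ?_⟩
  · simp [phim, norm_e2pi]
  · rw [phim, norm_mul, norm_mul, norm_e2pi, mul_one, Complex.norm_real, Real.norm_eq_abs]
    gcongr
    exact SchwartzMap.norm_le_seminorm ℝ φ _

lemma psi_props (Φ : SchwartzMap ℝ ℂ) (j : ℤ) :
    Integrable (psi Φ j) ∧ Continuous (psi Φ j) ∧ ∃ M, ∀ x, ‖psi Φ j x‖ ≤ M := by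
  have p2 : ∀ n : ℤ, ((2:ℝ) ^ n) ≠ 0 := fun n => by positivity
  refine ⟨?_, ?_, |(2:ℝ) ^ j| * (SchwartzMap.seminorm ℝ 0 0) Φ + |(2:ℝ) ^ (j - 1)| * (SchwartzMap.seminorm ℝ 0 0) Φ, fun x => ?_⟩
  · exact (((Φ.integrable (μ := volume)).comp_mul_left' (p2 j)).const_mul _).sub (((Φ.integrable (μ := volume)).comp_mul_left' (p2 (j-1))).const_mul _)
  · unfold psi
    have := Φ.continuous
    fun_prop
  · unfold psi
    refine (norm_sub_le _ _).trans ?_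
    rw [norm_mul, norm_mul, Complex.norm_real, Real.norm_eq_abs, Complex.norm_real, Real.norm_eq_abs]
    gcongr
    · exact SchwartzMap.norm_le_seminorm ℝ Φ _
    · exact SchwartzMap.norm_le_seminorm ℝ Φ _

lemma enorm_conv_phim (φ : SchwartzMap ℝ ℂ) (a b : ℝ) (F : ℝ → ℂ) (x : ℝ) :
    ‖conv F (phim φ a b) x‖ₑ = ‖∫ y, kk φ a b x y * F y‖ₑ := by
  have : conv F (phim φ a b) x = e2pi (a * x) * ∫ y, kk φ a b x y * F y := by
    rw [← integral_const_mul]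
    unfold conv
    congr 1; ext y
    rw [phim, kk, wp, show a * (x - y) = a * x + -(a * y) by ring, e2pi_add]
    ring
  rw [this, enorm_mul, ← ofReal_norm (e2pi _), norm_e2pi]; simp

lemma lqNorm_le (q : ℝ≥0∞) (hq : 0 < q) (F G : ℤ → ℝ≥0∞) (C : ℝ≥0∞) (h : ∀ j, F j ≤ C * G j) :
    lqNorm q F ≤ C * lqNorm q G := by
  unfold lqNorm
  split_ifs with hq'
  · rw [ENNReal.mul_iSup]
    exact iSup_mono h
  · have q0 : 0 < q.toReal := ENNReal.toReal_pos hq.ne' hq'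
    have : ∑' j, F j ^ q.toReal ≤ C ^ q.toReal * ∑' j, G j ^ q.toReal := by
      rw [← ENNReal.tsum_mul_left]
      refine ENNReal.tsum_le_tsum fun j => ?_
      rw [← ENNReal.mul_rpow_of_nonneg _ _ q0.le]
      exact ENNReal.rpow_le_rpow (h j) q0.le
    refine (ENNReal.rpow_le_rpow this (by positivity)).trans (le_of_eq ?_)
    rw [ENNReal.mul_rpow_of_nonneg _ _ (by positivity), ← ENNReal.rpow_mul, mul_one_div_cancel q0.ne', ENNReal.rpow_one]

/-- uniform boundedness of the family WITHOUT rotations on the homogeneous Besov space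
`Ḃ^s_{pq}`, for `2 ≤ p < ∞`, `0 < q ≤ ∞` and `s ≥ 0`. -/
theorem statement11 (φ Φ : SchwartzMap ℝ ℂ)
    (hφ : Function.support (𝓕 ⇑φ) ⊆ Set.Ioo 0 1)
    (hΦsupp : Function.support (𝓕 ⇑Φ) ⊆ Set.Icc (-2) 2)
    (hΦone : ∀ ξ ∈ Set.Icc (-1:ℝ) 1, 𝓕 ⇑Φ ξ = 1)
    (p : ℝ) (q : ℝ≥0∞) (s : ℝ) (hp : 2 ≤ p) (hq : 0 < q) (hs : 0 ≤ s) :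
    ∃ C : ℝ, 0 < C ∧ ∀ (N : ℕ) (a b : Fin N → ℝ), Admissible a b →
      ∀ f : SchwartzMap ℝ ℂ,
        (lqNorm q fun j : ℤ => (2 : ℝ≥0∞) ^ ((j : ℝ) * s) *
            (∫⁻ x : ℝ, ((∑ m : Fin N,
              (‖conv (conv ⇑f (phim ⇑φ (a m) (b m))) (psi ⇑Φ j) x‖₊ : ℝ≥0∞) ^ 2)
                ^ (1/2 : ℝ)) ^ p) ^ (1/p))
        ≤ ENNReal.ofReal C *
          lqNorm q (fun j : ℤ => (2 : ℝ≥0∞) ^ ((j : ℝ) * s) *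
            (∫⁻ x : ℝ, (‖conv ⇑f (psi ⇑Φ j) x‖₊ : ℝ≥0∞) ^ p) ^ (1/p)) := by
  obtain ⟨C, hC, hS⟩ := Sf_Lp φ (hφ.trans Ioo_subset_Icc_self) p hp
  refine ⟨C.toReal + 1, by positivity, fun N a b hadm f => ?_⟩
  obtain ⟨hab, -, hd⟩ := hadm
  refine lqNorm_le q hq _ _ _ fun j => ?_
  have hC' : C ≤ ENNReal.ofReal (C.toReal + 1) := by
    rw [← ENNReal.ofReal_toReal hC]
    exact ENNReal.ofReal_le_ofReal (by simp)
  obtain ⟨pi, pc, pM, pb⟩ := psi_props Φ j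
  obtain ⟨Fi, Fb⟩ := conv_props f (psi Φ j) f.integrable pi pc pM pb
  have main := hS N a b hab hd (conv f (psi Φ j)) Fi Fb
  have e : ∀ x, ((∑ m : Fin N, (‖conv (conv ⇑f (phim ⇑φ (a m) (b m))) (psi ⇑Φ j) x‖₊ : ℝ≥0∞) ^ 2) ^ (1/2 : ℝ))
      = ‖Sf φ a b (conv f (psi Φ j)) x‖ₑ := by
    intro x
    have : ∑ m : Fin N, (‖conv (conv ⇑f (phim ⇑φ (a m) (b m))) (psi ⇑Φ j) x‖₊ : ℝ≥0∞) ^ 2 = ‖Sf φ a b (conv f (psi Φ j)) x‖ₑ ^ 2 := by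
      rw [← sum_enorm_sq]
      refine Finset.sum_congr rfl fun m _ => ?_
      obtain ⟨fi, fc, fM, fb⟩ := phim_props φ (a m) (b m) (hab m)
      rw [conv_swap f _ _ f.integrable fi fc fM fb pi pc pM pb]
      change ‖(_ : ℂ)‖ₑ ^ 2 = _
      rw [enorm_conv_phim]
      rfl
    rw [this, ← ENNReal.rpow_natCast, ← ENNReal.rpow_mul]
    norm_num
  simp_rw [e]
  rw [mul_left_comm]
  gcongr
  exact main.trans (by gcongr; exact le_rfl)
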